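/- Assume (H2). There exists a constant C₁ > 1, depending only on a₀ and C₀, such that for every ε₀ ∈ (0, 1/(2C₁)), every λ > 1 and every η ∈ (0, 1/2): N(λ; q̂^Ã_K) ≤ (|K| β / (2π e^{t₀})) Σ_{k=0}^∞ [Λ_M(λ) - 1/4 - (2k+1)β]₊⁰, where β = b(x₀, e^{t₀}), Λ_M(λ) = (1 - η²)⁻¹ ( λ/(1 - ε₀ C₁) + (ε₀⁴/η²) C₁ β² ), and [ρ]₊⁰ = 1 if ρ > 0 and 0 otherwise. -/

import Mathlib

open MeasureTheory Real Filter

noncomputable section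

/-- The upper half-plane ℍ as a subset of ℝ². -/
def UHP : Set (ℝ × ℝ) := {p : ℝ × ℝ | 0 < p.2}

/-- The hyperbolic measure `dv = y⁻² dx dy` on ℍ. -/
def volH : Measure (ℝ × ℝ) :=
  (volume.restrict UHP).withDensity fun p => ENNReal.ofReal ((p.2 ^ 2)⁻¹)

/-- x-derivative of a complex function on ℝ². -/
def dX (f : ℝ × ℝ → ℂ) (p : ℝ × ℝ) : ℂ := fderiv ℝ f p (1, 0)

/-- y-derivative of a complex function on ℝ². -/
def dY (f : ℝ × ℝ → ℂ) (p : ℝ × ℝ) : ℂ := fderiv ℝ f p (0, 1)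

/-- x-derivative of a real function on ℝ². -/
def dXr (f : ℝ × ℝ → ℝ) (p : ℝ × ℝ) : ℝ := fderiv ℝ f p (1, 0)

/-- y-derivative of a real function on ℝ². -/
def dYr (f : ℝ × ℝ → ℝ) (p : ℝ × ℝ) : ℝ := fderiv ℝ f p (0, 1)

/-- The magnetic field `b̃ = y² (∂ₓA₂ - ∂_yA₁)`. -/
def fieldB (A₁ A₂ : ℝ × ℝ → ℝ) (p : ℝ × ℝ) : ℝ := p.2 ^ 2 * (dXr A₂ p - dYr A₁ p)

/-- The magnetic intensity `b = |b̃|`. -/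
def intenB (A₁ A₂ : ℝ × ℝ → ℝ) (p : ℝ × ℝ) : ℝ := |fieldB A₁ A₂ p|

/-- Smooth compactly supported test functions with support inside a set `Ω`. -/
def IsTestOn (Ω : Set (ℝ × ℝ)) (f : ℝ × ℝ → ℂ) : Prop :=
  ContDiff ℝ (⊤ : ℕ∞) f ∧ HasCompactSupport f ∧ tsupport f ⊆ Ω

/-- The quadratic form of the magnetic Laplacian on ℍ. -/
def qA (A₁ A₂ : ℝ × ℝ → ℝ) (f : ℝ × ℝ → ℂ) : ℝ :=
  ∫ p, p.2 ^ 2 * (‖-Complex.I * dX f p - (A₁ p : ℂ) * f p‖ ^ 2 +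
    ‖-Complex.I * dY f p - (A₂ p : ℂ) * f p‖ ^ 2) ∂volH

/-- hyperbolic distance from `(x,y)` to `(0,1)`. -/
def hDist (p : ℝ × ℝ) : ℝ :=
  2 * Real.arsinh (Real.sqrt (p.1 ^ 2 + (p.2 - 1) ^ 2) / (2 * Real.sqrt p.2))

/-- (H1) : the magnetic intensity tends to +∞ at infinity. -/
def H1 (A₁ A₂ : ℝ × ℝ → ℝ) : Prop :=
  ∀ M : ℝ, ∃ R : ℝ, ∀ p ∈ UHP, R ≤ hDist p → M ≤ intenB A₁ A₂ p

/-- (H2) : control of the derivative of the magnetic field. -/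
def H2 (C₀ : ℝ) (A₁ A₂ : ℝ × ℝ → ℝ) : Prop :=
  ∀ p ∈ UHP, p.2 * Real.sqrt ((dXr (fieldB A₁ A₂) p) ^ 2 + (dYr (fieldB A₁ A₂) p) ^ 2)
    ≤ C₀ * (intenB A₁ A₂ p + 1)

/-- Counting function of a quadratic form `q` with form domain `dom` and squared
norm `nsq`, via Glazman's lemma. -/
def NN (q : (ℝ × ℝ → ℂ) → ℝ) (dom : Set (ℝ × ℝ → ℂ)) (nsq : (ℝ × ℝ → ℂ) → ℝ)
    (lam : ℝ) : ℕ :=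
  sSup {n : ℕ | ∃ V : Submodule ℂ (ℝ × ℝ → ℂ), (V : Set (ℝ × ℝ → ℂ)) ⊆ dom ∧
    Module.finrank ℂ V = n ∧ ∀ u ∈ V, u ≠ 0 → q u < lam * nsq u}

/-- Heaviside function `[ρ]₊⁰`. -/
def heav (ρ : ℝ) : ℝ := if 0 < ρ then 1 else 0


/-- The rectangle `K = X₀ + K₀` with `K₀ = (-ε₀ a e^{t₀}/2, ε₀ a e^{t₀}/2) × (-ε₀/2, ε₀/2)`. -/
def Krect (x₀ t₀ a ε₀ : ℝ) : Set (ℝ × ℝ) :=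
  Set.Ioo (x₀ - ε₀ * a * Real.exp t₀ / 2) (x₀ + ε₀ * a * Real.exp t₀ / 2) ×ˢ
    Set.Ioo (t₀ - ε₀ / 2) (t₀ + ε₀ / 2)

/-- `Ã₁(x,t) = -∫_{e^{t₀}}^{e^t} b̃(x,s) s⁻² ds`. -/
def Atil (A₁ A₂ : ℝ × ℝ → ℝ) (t₀ : ℝ) (p : ℝ × ℝ) : ℝ :=
  -∫ s in Real.exp t₀..Real.exp p.2, fieldB A₁ A₂ (p.1, s) / s ^ 2

/-- `A₁⁰(x,t) = -(t - t₀) e^{-t₀} b̃₀`. -/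
def Azero (t₀ b₀ : ℝ) (p : ℝ × ℝ) : ℝ := -(p.2 - t₀) * Real.exp (-t₀) * b₀

/-- The Dirichlet form `q̂^Ã_K`. -/
def qhatK (A₁ A₂ : ℝ × ℝ → ℝ) (x₀ t₀ a ε₀ : ℝ) (w : ℝ × ℝ → ℂ) : ℝ :=
  ∫ p in Krect x₀ t₀ a ε₀,
    (Real.exp (2 * p.2) * ‖-Complex.I * dX w p - (Atil A₁ A₂ t₀ p : ℂ) * w p‖ ^ 2
      + ‖dY w p‖ ^ 2 + (1/4) * ‖w p‖ ^ 2)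

/-- The Dirichlet form `q̂^{Ã,0}_K` (with frozen factor `e^{2t₀}`). -/
def qhatK0 (A₁ A₂ : ℝ × ℝ → ℝ) (x₀ t₀ a ε₀ : ℝ) (w : ℝ × ℝ → ℂ) : ℝ :=
  ∫ p in Krect x₀ t₀ a ε₀,
    (Real.exp (2 * t₀) * ‖-Complex.I * dX w p - (Atil A₁ A₂ t₀ p : ℂ) * w p‖ ^ 2
      + ‖dY w p‖ ^ 2 + (1/4) * ‖w p‖ ^ 2)

/-- The Dirichlet form `q^{A⁰,0}_K` of the frozen constant magnetic field `b̃₀`. -/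
def qK0 (x₀ t₀ a ε₀ b₀ : ℝ) (w : ℝ × ℝ → ℂ) : ℝ :=
  ∫ p in Krect x₀ t₀ a ε₀,
    (Real.exp (2 * t₀) * ‖-Complex.I * dX w p - (Azero t₀ b₀ p : ℂ) * w p‖ ^ 2
      + ‖dY w p‖ ^ 2 + (1/4) * ‖w p‖ ^ 2)


/-- Dirichlet eigenvalue counting function of `q̂^Ã_K` on `L²(K)`. -/
def NKA (A₁ A₂ : ℝ × ℝ → ℝ) (x₀ t₀ a ε₀ lam : ℝ) : ℕ :=
  NN (qhatK A₁ A₂ x₀ t₀ a ε₀) {w | IsTestOn (Krect x₀ t₀ a ε₀) w}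
    (fun w => ∫ p in Krect x₀ t₀ a ε₀, ‖w p‖ ^ 2) lam

/-!
On a small rectangle `K` the metric factor `e ^ (2 t)` and the potential `Atil` may be frozen at
the centre. By Grönwall's lemma, (H2) makes the field vary by at most a multiple of `ε₀ β`, hence
the potential by a multiple of `ε₀ ^ 2 β`, and Young's inequality with parameter `η` absorbs this
error. It remains to count for the Dirichlet form of a constant field.

There a Fourier series in `x` turns the form into a sum of harmonic oscillators on the line whose
centres are equally spaced, and a function orthogonal to the first `l` eigenfunctions has oscillator
energy at least `(2 l + 1) β`. Only the oscillators centred near `K` impose conditions, but counting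
them on `K` itself loses a boundary term. Following Colin de Verdière, one stacks `n` magnetic
translates of `K` into one tall rectangle: the count is multiplied by `n` while the boundary term
stays bounded, and `n → ∞` gives the sharp constant.
-/

/-! ### Compactly supported functions -/

section CompactSupport

lemma integrable_of_hasCompactSupport_of_imp {X E F : Type*} [TopologicalSpace X]
    [MeasurableSpace X] [OpensMeasurableSpace X] {μ : Measure X} [IsFiniteMeasureOnCompacts μ]
    [Zero E] [NormedAddCommGroup F] {f : X → E} {h : X → F} (hf : HasCompactSupport f)
    (hh : Continuous h) (hfh : ∀ x, f x = 0 → h x = 0) : Integrable h μ :=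
  hh.integrable_of_hasCompactSupport (hf.mono fun x hx hfx => hx (hfh x hfx))

lemma integrable_norm_sq_of_hasCompactSupport {X E : Type*} [TopologicalSpace X]
    [MeasurableSpace X] [OpensMeasurableSpace X] {μ : Measure X} [IsFiniteMeasureOnCompacts μ]
    [NormedAddCommGroup E] {f : X → E} (hf : Continuous f) (hfs : HasCompactSupport f) :
    Integrable (fun x => ‖f x‖ ^ 2) μ :=
  integrable_of_hasCompactSupport_of_imp hfs (by fun_prop) (by simp_all)

variable {E : Type*} [NormedAddCommGroup E] [NormedSpace ℝ E] {f : ℝ → E}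

lemma hasDerivAt_integral_Iic [CompleteSpace E] (hf : Continuous f) (hfi : Integrable f) (t : ℝ) :
    HasDerivAt (fun s => ∫ r in Set.Iic s, f r) (f t) t := by
  have split : (fun s => ∫ r in Set.Iic s, f r) =
      fun s => (∫ r in Set.Iic 0, f r) + ∫ r in (0 : ℝ)..s, f r := by
    ext s
    rw [← intervalIntegral.integral_Iic_sub_Iic hfi.integrableOn hfi.integrableOn,
      add_sub_cancel]
  rw [split]
  exact (hf.integral_hasStrictDerivAt 0 t).hasDerivAt.const_add _

lemma hasCompactSupport_integral_Iic (hf : HasCompactSupport f) (h0 : ∫ r, f r = 0) :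
    HasCompactSupport fun s => ∫ r in Set.Iic s, f r := by
  obtain ⟨S, hS⟩ := hf.isCompact.isBounded.subset_closedBall 0
  have hf_zero : ∀ r, S < |r| → f r = 0 := fun r hr => by
    by_contra hne
    have hmem := hS (subset_tsupport f hne)
    rw [Metric.mem_closedBall, dist_zero_right, Real.norm_eq_abs] at hmem
    exact absurd hmem hr.not_ge
  refine HasCompactSupport.of_support_subset_isCompact (isCompact_closedBall (0 : ℝ) S)
    fun s hs => ?_
  by_contra hsS
  rw [Metric.mem_closedBall, dist_zero_right, Real.norm_eq_abs, not_le, lt_abs] at hsS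
  rcases hsS with hright | hleft
  · refine hs ?_
    beta_reduce
    rw [setIntegral_eq_integral_of_forall_compl_eq_zero, h0]
    intro r hr
    exact hf_zero r (lt_abs.2 (Or.inl (hright.trans (not_le.1 hr))))
  · refine hs (setIntegral_eq_zero_of_forall_eq_zero fun r hr => ?_)
    exact hf_zero r (lt_abs.2 (Or.inr (hleft.trans_le (neg_le_neg hr))))

lemma integral_pow_succ_smul_deriv [CompleteSpace E] (hf : ContDiff ℝ 1 f)
    (hfs : HasCompactSupport f) (c : ℝ) (k : ℕ) :
    ∫ t, (t - c) ^ (k + 1) • deriv f t = -((k + 1 : ℝ) • ∫ t, (t - c) ^ k • f t) := by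
  have : Continuous (deriv f) := hf.continuous_deriv_one
  have boundary := integral_eq_zero_of_hasDerivAt_of_integrable
    (f := fun t => (t - c) ^ (k + 1) • f t)
    (f' := fun t => (t - c) ^ (k + 1) • deriv f t + (k + 1 : ℝ) • (t - c) ^ k • f t)
    (fun t => by
      have := (((hasDerivAt_id t).sub_const c).pow (k + 1)).smul
        (hf.differentiable_one t).hasDerivAt
      refine this.congr_deriv ?_
      simp [mul_smul])
    ((integrable_of_hasCompactSupport_of_imp hfs.deriv (by fun_prop) (by simp_all)).add
      (integrable_of_hasCompactSupport_of_imp hfs (by fun_prop) (by simp_all)))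
    (integrable_of_hasCompactSupport_of_imp hfs (by fun_prop) (by simp_all))
  rw [integral_add (integrable_of_hasCompactSupport_of_imp hfs.deriv (by fun_prop) (by simp_all))
    (integrable_of_hasCompactSupport_of_imp hfs (by fun_prop) (by simp_all)),
    integral_smul] at boundary
  exact eq_neg_of_add_eq_zero_left boundary

end CompactSupport

/-! ### The harmonic oscillator -/

section Oscillator

variable {E : Type*} [NormedAddCommGroup E] [InnerProductSpace ℝ E] {f g : ℝ → E}

/-- The annihilation operator `d/dt + β (t - c)` of the harmonic oscillator centred at `c`. -/
def lowering (β c : ℝ) (f : ℝ → E) (t : ℝ) : E := deriv f t + (β * (t - c)) • f t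

/-- The creation operator `-d/dt + β (t - c)`, formal adjoint of `lowering β c`. -/
def raising (β c : ℝ) (f : ℝ → E) (t : ℝ) : E := -deriv f t + (β * (t - c)) • f t

/-- The quadratic form `∫ ‖f'‖² + b² (t - c)² ‖f‖²` of the harmonic oscillator centred at `c`. -/
def oscillatorEnergy (b c : ℝ) (f : ℝ → E) : ℝ :=
  ∫ t, (‖deriv f t‖ ^ 2 + b ^ 2 * (t - c) ^ 2 * ‖f t‖ ^ 2)

/-- The moment of `f` against `(t - c) ^ k` times the oscillator's ground state. For `k < l` these
functions span the first `l` Hermite eigenspaces, so that no Hermite functions are needed to express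
orthogonality to them. -/
def gaussianMoment (β c : ℝ) (k : ℕ) (f : ℝ → E) : E :=
  ∫ t, ((t - c) ^ k * exp (-(β * (t - c) ^ 2 / 2))) • f t

lemma gaussianMoment_add (hf : Continuous f) (hfs : HasCompactSupport f) (hg : Continuous g)
    (hgs : HasCompactSupport g) (β c : ℝ) (k : ℕ) :
    gaussianMoment β c k (f + g) = gaussianMoment β c k f + gaussianMoment β c k g := by
  have integrable {f : ℝ → E} (hf : Continuous f) (hfs : HasCompactSupport f) :
      Integrable fun t => ((t - c) ^ k * exp (-(β * (t - c) ^ 2 / 2))) • f t :=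
    integrable_of_hasCompactSupport_of_imp hfs (by fun_prop) fun t ht => by simp [ht]
  simp only [gaussianMoment, Pi.add_apply, smul_add]
  exact integral_add (integrable hf hfs) (integrable hg hgs)

lemma gaussianMoment_smul {𝕜 : Type*} [NormedDivisionRing 𝕜] [Module 𝕜 E] [NormSMulClass 𝕜 E]
    [SMulCommClass ℝ 𝕜 E] (z : 𝕜) (f : ℝ → E) (β c : ℝ) (k : ℕ) :
    gaussianMoment β c k (z • f) = z • gaussianMoment β c k f := by
  simp only [gaussianMoment, Pi.smul_apply, smul_comm _ z, integral_smul]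

lemma oscillatorEnergy_abs (b c : ℝ) (f : ℝ → E) :
    oscillatorEnergy |b| c f = oscillatorEnergy b c f := by
  simp only [oscillatorEnergy, sq_abs]

lemma oscillatorEnergy_comp_sub (b c s : ℝ) (f : ℝ → E) :
    oscillatorEnergy b c (fun t => f (t - s)) = oscillatorEnergy b (c - s) f := by
  simp only [oscillatorEnergy, deriv_comp_sub_const]
  rw [← integral_add_right_eq_self _ s]
  simp only [add_sub_cancel_right, sub_sub_eq_add_sub]

lemma integrable_oscillatorEnergy (hf : ContDiff ℝ 1 f) (hfs : HasCompactSupport f) (b c : ℝ) :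
    Integrable fun t => ‖deriv f t‖ ^ 2 + b ^ 2 * (t - c) ^ 2 * ‖f t‖ ^ 2 := by
  have := hf.continuous_deriv_one
  exact .add (integrable_of_hasCompactSupport_of_imp hfs.deriv (by fun_prop) (by simp_all))
    (integrable_of_hasCompactSupport_of_imp hfs (by fun_prop) (by simp_all))

lemma integrable_mul_inner_deriv (hf : ContDiff ℝ 1 f) (hfs : HasCompactSupport f) (c : ℝ) :
    Integrable fun t => (t - c) * inner ℝ (f t) (deriv f t) := by
  have := hf.continuous_deriv_one
  exact integrable_of_hasCompactSupport_of_imp hfs (by fun_prop) (by simp_all)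

lemma integral_mul_inner_deriv (hf : ContDiff ℝ 1 f) (hfs : HasCompactSupport f) (c : ℝ) :
    ∫ t, (t - c) * inner ℝ (f t) (deriv f t) = -(1 / 2) * ∫ t, ‖f t‖ ^ 2 := by
  have int_sq : Integrable fun t => ‖f t‖ ^ 2 :=
    integrable_norm_sq_of_hasCompactSupport hf.continuous hfs
  have int_inner := (integrable_mul_inner_deriv hf hfs c).const_mul 2
  have boundary := integral_eq_zero_of_hasDerivAt_of_integrable
    (f := fun t => (t - c) * ‖f t‖ ^ 2)
    (fun t => (((hasDerivAt_id t).sub_const c).mul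
      (hf.differentiable_one t).hasDerivAt.norm_sq).congr_deriv
        (show _ = ‖f t‖ ^ 2 + 2 * ((t - c) * inner ℝ (f t) (deriv f t)) by simp; ring))
    (int_sq.add int_inner)
    (integrable_of_hasCompactSupport_of_imp hfs (by have := hf.continuous; fun_prop) (by simp_all))
  rw [integral_add' int_sq int_inner, integral_const_mul] at boundary
  linarith

lemma integral_norm_lowering_sq (hf : ContDiff ℝ 1 f) (hfs : HasCompactSupport f) (β c : ℝ) :
    ∫ t, ‖lowering β c f t‖ ^ 2 = oscillatorEnergy β c f - β * ∫ t, ‖f t‖ ^ 2 := by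
  have expand : ∀ t, ‖lowering β c f t‖ ^ 2 =
      (‖deriv f t‖ ^ 2 + β ^ 2 * (t - c) ^ 2 * ‖f t‖ ^ 2) +
        2 * β * ((t - c) * inner ℝ (f t) (deriv f t)) := fun t => by
    rw [lowering, norm_add_sq_real, norm_smul, real_inner_smul_right, real_inner_comm, mul_pow,
      Real.norm_eq_abs, sq_abs]
    ring
  simp_rw [expand]
  rw [integral_add (integrable_oscillatorEnergy hf hfs β c)
    ((integrable_mul_inner_deriv hf hfs c).const_mul _), integral_const_mul,
    integral_mul_inner_deriv hf hfs, oscillatorEnergy]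
  ring

lemma integral_norm_raising_sq (hf : ContDiff ℝ 1 f) (hfs : HasCompactSupport f) (β c : ℝ) :
    ∫ t, ‖raising β c f t‖ ^ 2 = oscillatorEnergy β c f + β * ∫ t, ‖f t‖ ^ 2 := by
  have neg_lowering : ∀ t, ‖raising β c f t‖ = ‖lowering (-β) c f t‖ := fun t => by
    rw [← norm_neg, raising, lowering, neg_add, neg_neg, neg_mul, neg_smul]
  simp_rw [neg_lowering]
  rw [integral_norm_lowering_sq hf hfs, oscillatorEnergy, oscillatorEnergy, neg_sq, neg_mul,
    sub_neg_eq_add]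

lemma integrable_norm_lowering_sq (hf : ContDiff ℝ 1 f) (hfs : HasCompactSupport f)
    (β c : ℝ) : Integrable fun t => ‖lowering β c f t‖ ^ 2 := by
  have := hf.continuous_deriv_one
  have hcs : HasCompactSupport (lowering β c f) :=
    hfs.deriv.add (hfs.smul_left (f := fun t => β * (t - c)))
  exact integrable_of_hasCompactSupport_of_imp hcs (by unfold lowering; fun_prop) (by simp_all)

lemma integrable_inner_lowering (hf : ContDiff ℝ 1 f) (β c : ℝ) (hg : Continuous g)
    (hgs : HasCompactSupport g) :
    Integrable fun t => inner ℝ (g t) (lowering β c f t) := by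
  have := hf.continuous_deriv_one
  exact integrable_of_hasCompactSupport_of_imp hgs (by unfold lowering; fun_prop) (by simp_all)

lemma integral_inner_lowering (hf : ContDiff ℝ 1 f) (hfs : HasCompactSupport f)
    (β c : ℝ) (hg : ContDiff ℝ 1 g) (hgs : HasCompactSupport g) :
    ∫ t, inner ℝ (g t) (lowering β c f t) = ∫ t, inner ℝ (raising β c g t) (f t) := by
  have := hf.continuous_deriv_one
  have := hg.continuous_deriv_one
  have int_lower := integrable_inner_lowering hf β c hg.continuous hgs
  have int_raise : Integrable fun t => inner ℝ (raising β c g t) (f t) :=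
    integrable_of_hasCompactSupport_of_imp hfs (by unfold raising; fun_prop) (by simp_all)
  have boundary := integral_eq_zero_of_hasDerivAt_of_integrable
    (f := fun t => inner ℝ (g t) (f t))
    (fun t => ((hg.differentiable_one t).hasDerivAt.inner ℝ
      (hf.differentiable_one t).hasDerivAt).congr_deriv
        (show _ = inner ℝ (g t) (lowering β c f t) - inner ℝ (raising β c g t) (f t) by
          simp only [lowering, raising, inner_add_right, inner_add_left, inner_neg_left,
            real_inner_smul_left, real_inner_smul_right]
          ring))
    (int_lower.sub int_raise)
    (integrable_of_hasCompactSupport_of_imp hfs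
      (by have := hg.continuous; have := hf.continuous; fun_prop) (by simp_all))
  rwa [integral_sub int_lower int_raise, sub_eq_zero] at boundary

lemma mul_integral_norm_sq_le_oscillatorEnergy (hf : ContDiff ℝ 1 f) (hfs : HasCompactSupport f)
    {b c μ : ℝ} (hμ : ∀ t, f t ≠ 0 → μ ≤ b ^ 2 * (t - c) ^ 2) :
    μ * ∫ t, ‖f t‖ ^ 2 ≤ oscillatorEnergy b c f := by
  rw [← integral_const_mul]
  refine integral_mono ((integrable_norm_sq_of_hasCompactSupport hf.continuous hfs).const_mul _)
    (integrable_oscillatorEnergy hf hfs b c) fun t => ?_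
  by_cases ht : f t = 0
  · simp [ht]
  · exact (mul_le_mul_of_nonneg_right (hμ t ht) (sq_nonneg _)).trans
      (le_add_of_nonneg_left (sq_nonneg _))

lemma two_mul_integral_inner_le (hf : ContDiff ℝ 1 f) (hfs : HasCompactSupport f)
    (hg : ContDiff ℝ 1 g) (hgs : HasCompactSupport g) (β c N : ℝ) :
    2 * N * ∫ t, inner ℝ (g t) (lowering β c f t) ≤
      (∫ t, ‖lowering β c f t‖ ^ 2) + N ^ 2 * ∫ t, ‖g t‖ ^ 2 := by
  have int_sum := (integrable_norm_lowering_sq hf hfs β c).add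
    ((integrable_norm_sq_of_hasCompactSupport hg.continuous hgs).const_mul (N ^ 2))
  rw [← integral_const_mul, ← integral_const_mul,
    ← integral_add (integrable_norm_lowering_sq hf hfs β c)
      ((integrable_norm_sq_of_hasCompactSupport hg.continuous hgs).const_mul _)]
  refine integral_mono ((integrable_inner_lowering hf β c hg.continuous hgs).const_mul _)
    int_sum fun t => ?_
  have square := sq_nonneg ‖lowering β c f t - N • g t‖
  rw [norm_sub_sq_real, real_inner_smul_right, norm_smul, real_inner_comm, mul_pow,
    Real.norm_eq_abs, sq_abs] at square
  change _ ≤ _ + _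
  linarith

/-- The solution `g(s) = -e^{β(s-c)²/2} ∫_{-∞}^s e^{-β(r-c)²/2} f(r) dr` of
`raising β c g = f`. -/
def raisingPreimage (β c : ℝ) (f : ℝ → E) (s : ℝ) : E :=
  -(exp (β * (s - c) ^ 2 / 2) • ∫ r in Set.Iic s, exp (-(β * (r - c) ^ 2 / 2)) • f r)

lemma hasCompactSupport_integral_Iic_gaussian_smul {β c : ℝ} (hfs : HasCompactSupport f)
    (h0 : gaussianMoment β c 0 f = 0) :
    HasCompactSupport fun s => ∫ r in Set.Iic s, exp (-(β * (r - c) ^ 2 / 2)) • f r :=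
  hasCompactSupport_integral_Iic (f := fun r => exp (-(β * (r - c) ^ 2 / 2)) • f r)
    hfs.smul_left (by simpa [gaussianMoment] using h0)

lemma hasCompactSupport_raisingPreimage {β c : ℝ} (hfs : HasCompactSupport f)
    (h0 : gaussianMoment β c 0 f = 0) : HasCompactSupport (raisingPreimage β c f) :=
  ((hasCompactSupport_integral_Iic_gaussian_smul hfs h0).smul_left
    (f := fun s => exp (β * (s - c) ^ 2 / 2))).neg

section Ladder

variable [CompleteSpace E]

lemma hasDerivAt_integral_Iic_gaussian_smul (β c : ℝ) (hf : Continuous f)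
    (hfs : HasCompactSupport f) (t : ℝ) :
    HasDerivAt (fun s => ∫ r in Set.Iic s, exp (-(β * (r - c) ^ 2 / 2)) • f r)
      (exp (-(β * (t - c) ^ 2 / 2)) • f t) t :=
  hasDerivAt_integral_Iic (by fun_prop)
    (integrable_of_hasCompactSupport_of_imp hfs (by fun_prop) (by simp_all)) t

lemma hasDerivAt_raisingPreimage (β c : ℝ) (hf : Continuous f) (hfs : HasCompactSupport f)
    (t : ℝ) :
    HasDerivAt (raisingPreimage β c f) ((β * (t - c)) • raisingPreimage β c f t - f t) t := by
  have hexp : HasDerivAt (fun s => exp (β * (s - c) ^ 2 / 2))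
      (exp (β * (t - c) ^ 2 / 2) * (β * (t - c))) t := by
    refine HasDerivAt.exp (((((hasDerivAt_id t).sub_const c).pow 2).const_mul β).div_const 2
      |>.congr_deriv ?_)
    simp
    ring
  refine (hexp.smul (hasDerivAt_integral_Iic_gaussian_smul β c hf hfs t)).neg.congr_deriv ?_
  rw [raisingPreimage, smul_smul, ← exp_add, add_neg_cancel, exp_zero, one_smul, smul_neg,
    smul_smul, mul_comm (β * (t - c))]
  abel

lemma contDiff_raisingPreimage (β c : ℝ) (hf : Continuous f) (hfs : HasCompactSupport f) :
    ContDiff ℝ 1 (raisingPreimage β c f) := by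
  have hderiv := hasDerivAt_raisingPreimage β c hf hfs
  have hcont : Continuous (raisingPreimage β c f) :=
    continuous_iff_continuousAt.2 fun t => (hderiv t).continuousAt
  rw [contDiff_one_iff_deriv, deriv_eq hderiv]
  exact ⟨fun t => (hderiv t).differentiableAt, by fun_prop⟩

lemma raising_raisingPreimage (β c : ℝ) (hf : Continuous f) (hfs : HasCompactSupport f) :
    raising β c (raisingPreimage β c f) = f := by
  ext t
  rw [raising, (hasDerivAt_raisingPreimage β c hf hfs t).deriv]
  abel

lemma gaussianMoment_succ (β c : ℝ) (k : ℕ) (hf : Continuous f) (hfs : HasCompactSupport f)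
    (h0 : gaussianMoment β c 0 f = 0) :
    gaussianMoment β c (k + 1) f =
      (k + 1 : ℝ) • gaussianMoment β c k (raisingPreimage β c f) := by
  set F := fun s => ∫ r in Set.Iic s, exp (-(β * (r - c) ^ 2 / 2)) • f r
  have hderiv : deriv F = fun t => exp (-(β * (t - c) ^ 2 / 2)) • f t :=
    deriv_eq (hasDerivAt_integral_Iic_gaussian_smul β c hf hfs)
  have hF : ContDiff ℝ 1 F := by
    rw [contDiff_one_iff_deriv, hderiv]
    exact ⟨fun t => (hasDerivAt_integral_Iic_gaussian_smul β c hf hfs t).differentiableAt,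
      by fun_prop⟩
  have hpre : ∀ t, ((t - c) ^ k * exp (-(β * (t - c) ^ 2 / 2))) • raisingPreimage β c f t =
      -((t - c) ^ k • F t) := fun t => by
    rw [raisingPreimage, smul_neg, smul_smul, mul_assoc, ← exp_add, neg_add_cancel, exp_zero,
      mul_one]
  have parts := integral_pow_succ_smul_deriv hF
    (hasCompactSupport_integral_Iic_gaussian_smul hfs h0) c k
  simp only [hderiv, smul_smul] at parts
  simp only [gaussianMoment, hpre, parts, integral_neg, smul_neg]

theorem mul_integral_norm_sq_le_integral_norm_lowering_sq {β c : ℝ} (hβ : 0 ≤ β) (l : ℕ)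
    (hf : ContDiff ℝ 1 f) (hfs : HasCompactSupport f)
    (hmom : ∀ k < l, gaussianMoment β c k f = 0) :
    2 * l * β * ∫ t, ‖f t‖ ^ 2 ≤ ∫ t, ‖lowering β c f t‖ ^ 2 := by
  induction l generalizing f with
  | zero => simpa using integral_nonneg fun t => sq_nonneg ‖lowering β c f t‖
  | succ l ih =>
    set g := raisingPreimage β c f
    have h0 : gaussianMoment β c 0 f = 0 := hmom 0 l.succ_pos
    have hg : ContDiff ℝ 1 g := contDiff_raisingPreimage β c hf.continuous hfs
    have hgs : HasCompactSupport g := hasCompactSupport_raisingPreimage hfs h0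
    have hgmom : ∀ k < l, gaussianMoment β c k g = 0 := fun k hk => by
      have := hmom (k + 1) (by omega)
      rw [gaussianMoment_succ β c k hf.continuous hfs h0] at this
      exact (smul_eq_zero.1 this).resolve_left (by positivity)
    have hraise : raising β c g = f := raising_raisingPreimage β c hf.continuous hfs
    have g_le_f : 2 * (l + 1) * β * ∫ t, ‖g t‖ ^ 2 ≤ ∫ t, ‖f t‖ ^ 2 := by
      have lower := integral_norm_lowering_sq hg hgs β c
      have raise := integral_norm_raising_sq hg hgs β c
      rw [hraise] at raise
      linarith [ih hg hgs hgmom]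
    have pairing := integral_inner_lowering hf hfs β c hg hgs
    simp only [hraise, real_inner_self_eq_norm_sq] at pairing
    have young := two_mul_integral_inner_le hf hfs hg hgs β c (2 * (l + 1) * β)
    rw [pairing] at young
    have := mul_le_mul_of_nonneg_left g_le_f (by positivity : 0 ≤ 2 * (l + 1) * β)
    push_cast
    linarith

theorem mul_integral_norm_sq_le_oscillatorEnergy_of_gaussianMoment_eq_zero {β c : ℝ} (hβ : 0 ≤ β)
    (l : ℕ) (hf : ContDiff ℝ 1 f) (hfs : HasCompactSupport f)
    (hmom : ∀ k < l, gaussianMoment β c k f = 0) :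
    (2 * l + 1) * β * ∫ t, ‖f t‖ ^ 2 ≤ oscillatorEnergy β c f := by
  linarith [mul_integral_norm_sq_le_integral_norm_lowering_sq hβ l hf hfs hmom,
    integral_norm_lowering_sq hf hfs β c]

end Ladder

section Disjoint

variable {ι : Type*} [Fintype ι] {φ : ι → ℝ → E}

lemma norm_sum_sq_of_disjoint_support {X F : Type*} [NormedAddCommGroup F] {φ : ι → X → F}
    (hdisj : Pairwise fun i j => Disjoint (Function.support (φ i)) (Function.support (φ j)))
    (x : X) : ‖∑ j, φ j x‖ ^ 2 = ∑ j, ‖φ j x‖ ^ 2 := by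
  by_cases hall : ∀ j, φ j x = 0
  · simp [hall]
  · push Not at hall
    obtain ⟨i, hi⟩ := hall
    have hother : ∀ j, j ≠ i → φ j x = 0 := fun j hj =>
      not_not.1 (Set.disjoint_left.1 (hdisj hj.symm) hi)
    rw [Fintype.sum_eq_single i hother,
      Fintype.sum_eq_single i fun j hj => by simp [hother j hj]]

lemma disjoint_support_deriv {F : Type*} [NormedAddCommGroup F] [NormedSpace ℝ F] {f g : ℝ → F}
    (hf : Differentiable ℝ f) (hg : Differentiable ℝ g)
    (h : Disjoint (Function.support f) (Function.support g)) :
    Disjoint (Function.support (deriv f)) (Function.support (deriv g)) := by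
  rw [Set.disjoint_left] at h ⊢
  intro t hft hgt
  obtain ⟨s, hfs, hgs⟩ := ((hf t).hasDerivAt.eventually_ne (c := 0) hft).and
    ((hg t).hasDerivAt.eventually_ne (c := 0) hgt) |>.exists
  exact h hfs hgs

lemma integral_norm_sum_sq {X F : Type*} [MeasurableSpace X] {μ : Measure X}
    [NormedAddCommGroup F] {φ : ι → X → F} (hφ : ∀ j, Integrable (fun x => ‖φ j x‖ ^ 2) μ)
    (hdisj : Pairwise fun i j => Disjoint (Function.support (φ i)) (Function.support (φ j))) :
    ∫ x, ‖∑ j, φ j x‖ ^ 2 ∂μ = ∑ j, ∫ x, ‖φ j x‖ ^ 2 ∂μ := by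
  simp_rw [norm_sum_sq_of_disjoint_support hdisj]
  exact integral_finsetSum _ fun j _ => hφ j

lemma oscillatorEnergy_sum (b c : ℝ) (hφ : ∀ j, ContDiff ℝ 1 (φ j))
    (hφs : ∀ j, HasCompactSupport (φ j))
    (hdisj : Pairwise fun i j => Disjoint (Function.support (φ i)) (Function.support (φ j))) :
    oscillatorEnergy b c (fun t => ∑ j, φ j t) = ∑ j, oscillatorEnergy b c (φ j) := by
  have hderiv : ∀ t, deriv (fun s => ∑ j, φ j s) t = ∑ j, deriv (φ j) t := fun t =>
    deriv_fun_sum fun j _ => (hφ j).differentiable_one t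
  have hdisj' : Pairwise fun i j =>
      Disjoint (Function.support (deriv (φ i))) (Function.support (deriv (φ j))) := fun i j hij =>
    disjoint_support_deriv (hφ i).differentiable_one (hφ j).differentiable_one (hdisj hij)
  simp only [oscillatorEnergy]
  rw [← integral_finsetSum _ fun j _ => integrable_oscillatorEnergy (hφ j) (hφs j) b c]
  simp only [hderiv, norm_sum_sq_of_disjoint_support hdisj,
    norm_sum_sq_of_disjoint_support hdisj', Finset.sum_add_distrib, Finset.mul_sum]

end Disjoint

end Oscillator

/-! ### The Fourier transform in the first variable -/

section PartialFourier

variable {A B : ℝ} {g h w : ℝ × ℝ → ℂ}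

/-- The Fourier coefficient at frequency `ξ` of `x ↦ g (x, t)` over `[A, B]`, not normalised. The
frequency is a real number because the frequencies used run through translates of the dual lattice
of `(B - A) ℤ`. -/
def partialFourier (A B : ℝ) (g : ℝ × ℝ → ℂ) (ξ t : ℝ) : ℂ :=
  ∫ x in A..B, Complex.exp (-(Complex.I * ξ * x)) * g (x, t)

lemma norm_cexp_neg_I_mul_mul (ξ x : ℝ) : ‖Complex.exp (-(Complex.I * ξ * x))‖ = 1 := by
  rw [← Complex.norm_exp_ofReal_mul_I (-(ξ * x))]
  congr 2
  push_cast
  ring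

lemma continuous_partialFourier (hg : Continuous g) (ξ : ℝ) :
    Continuous (partialFourier A B g ξ) :=
  intervalIntegral.continuous_parametric_intervalIntegral_of_continuous'
    (by unfold Function.uncurry; fun_prop) A B

lemma partialFourier_add (hg : Continuous g) (hh : Continuous h) (ξ t : ℝ) :
    partialFourier A B (g + h) ξ t = partialFourier A B g ξ t + partialFourier A B h ξ t := by
  simp only [partialFourier, Pi.add_apply, mul_add]
  exact intervalIntegral.integral_add (Continuous.intervalIntegrable (by fun_prop) _ _)
    (Continuous.intervalIntegrable (by fun_prop) _ _)

lemma partialFourier_smul (z : ℂ) (g : ℝ × ℝ → ℂ) (ξ t : ℝ) :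
    partialFourier A B (z • g) ξ t = z * partialFourier A B g ξ t := by
  simp only [partialFourier, Pi.smul_apply, smul_eq_mul, mul_left_comm _ z]
  exact intervalIntegral.integral_const_mul _ _

lemma support_partialFourier_subset (A B : ℝ) (g : ℝ × ℝ → ℂ) (ξ : ℝ) :
    Function.support (partialFourier A B g ξ) ⊆ Prod.snd '' Function.support g := by
  intro t ht
  by_contra hnot
  have hzero : ∀ x, g (x, t) = 0 := fun x => by
    by_contra hne
    exact hnot ⟨(x, t), hne, rfl⟩
  exact ht (by simp [partialFourier, hzero])

lemma hasCompactSupport_partialFourier (hg : HasCompactSupport g) (ξ : ℝ) :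
    HasCompactSupport (partialFourier A B g ξ) :=
  .of_support_subset_isCompact (hg.isCompact.image continuous_snd)
    ((support_partialFourier_subset A B g ξ).trans (Set.image_mono (subset_tsupport g)))

lemma integrable_norm_partialFourier_sq (hg : Continuous g) (hgs : HasCompactSupport g) (ξ : ℝ) :
    Integrable fun t => ‖partialFourier A B g ξ t‖ ^ 2 :=
  integrable_norm_sq_of_hasCompactSupport (continuous_partialFourier hg ξ)
    (hasCompactSupport_partialFourier hgs ξ)

lemma partialFourier_eq_mul_fourierCoeffOn (hAB : A < B) (g : ℝ × ℝ → ℂ) (σ t : ℝ) (m : ℤ) :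
    partialFourier A B g (2 * π * m / (B - A) + σ) t =
      (B - A) * fourierCoeffOn hAB (fun x => Complex.exp (-(Complex.I * σ * x)) * g (x, t)) m := by
  have hBA : (B - A : ℂ) ≠ 0 := by exact_mod_cast (sub_pos.2 hAB).ne'
  rw [fourierCoeffOn_eq_integral, Complex.real_smul, ← mul_assoc]
  push_cast
  rw [mul_one_div_cancel hBA, one_mul, partialFourier]
  refine intervalIntegral.integral_congr fun x _ => ?_
  simp only [fourier_coe_apply, smul_eq_mul]
  rw [← mul_assoc, ← Complex.exp_add]
  congr 2
  push_cast
  field_simp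
  ring

lemma hasSum_norm_partialFourier_sq (hAB : A < B) (hg : Continuous g) (σ t : ℝ) :
    HasSum (fun m : ℤ => ‖partialFourier A B g (2 * π * m / (B - A) + σ) t‖ ^ 2)
      ((B - A) * ∫ x in A..B, ‖g (x, t)‖ ^ 2) := by
  have hBA : 0 < B - A := sub_pos.2 hAB
  set f : ℝ → ℂ := fun x => Complex.exp (-(Complex.I * σ * x)) * g (x, t) with hf
  have hfc : Continuous f := by fun_prop
  have hmem : MemLp f 2 (volume.restrict (Set.Ioc A B)) := by
    obtain ⟨C, hC⟩ := isCompact_Icc.exists_bound_of_continuousOn hfc.continuousOn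
    refine .of_bound hfc.aestronglyMeasurable C ?_
    filter_upwards [ae_restrict_mem measurableSet_Ioc] with x hx
    exact hC x (Set.Ioc_subset_Icc_self hx)
  have hnorm : ∀ x, ‖f x‖ = ‖g (x, t)‖ := fun x => by
    rw [hf, norm_mul, norm_cexp_neg_I_mul_mul, one_mul]
  have hcoeff : ∀ m : ℤ, ‖partialFourier A B g (2 * π * m / (B - A) + σ) t‖ ^ 2 =
      (B - A) ^ 2 * ‖fourierCoeffOn hAB f m‖ ^ 2 := fun m => by
    rw [partialFourier_eq_mul_fourierCoeffOn hAB, norm_mul, mul_pow, ← Complex.ofReal_sub,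
      Complex.norm_real, Real.norm_eq_abs, sq_abs]
  have parseval := (hasSum_sq_fourierCoeffOn hAB hmem).mul_left ((B - A) ^ 2)
  simp only [hnorm, smul_eq_mul, ← hcoeff] at parseval
  rwa [sq, mul_assoc, mul_inv_cancel_left₀ hBA.ne'] at parseval

lemma integrable_integral_norm_sq (hg : Continuous g) (hgs : HasCompactSupport g) :
    Integrable fun t => ∫ x in A..B, ‖g (x, t)‖ ^ 2 := by
  have hzero : ∀ t, t ∉ Prod.snd '' tsupport g → ∫ x in A..B, ‖g (x, t)‖ ^ 2 = 0 :=
    fun t ht => by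
      have : ∀ x, g (x, t) = 0 := fun x =>
        image_eq_zero_of_notMem_tsupport fun hx => ht ⟨(x, t), hx, rfl⟩
      simp [this]
  refine Continuous.integrable_of_hasCompactSupport ?_
    (.intro (hgs.isCompact.image continuous_snd) fun t ht => hzero t ht)
  exact intervalIntegral.continuous_parametric_intervalIntegral_of_continuous'
    (by unfold Function.uncurry; fun_prop) A B

lemma integral_integral_norm_sq (hg : Continuous g) (hgs : HasCompactSupport g)
    (hsupp : ∀ p, g p ≠ 0 → p.1 ∈ Set.Ioc A B) :
    ∫ t, ∫ x in A..B, ‖g (x, t)‖ ^ 2 = ∫ p, ‖g p‖ ^ 2 := by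
  rw [Measure.volume_eq_prod,
    integral_prod_symm _ (integrable_norm_sq_of_hasCompactSupport hg hgs)]
  congr 1 with t
  refine intervalIntegral.integral_eq_integral_of_support_subset fun x hx => hsupp (x, t) ?_
  simpa using hx

theorem hasSum_integral_norm_partialFourier_sq (hAB : A < B) (hg : Continuous g)
    (hgs : HasCompactSupport g) (hsupp : ∀ p, g p ≠ 0 → p.1 ∈ Set.Ioc A B) (σ : ℝ) :
    HasSum (fun m : ℤ => ∫ t, ‖partialFourier A B g (2 * π * m / (B - A) + σ) t‖ ^ 2)
      ((B - A) * ∫ p, ‖g p‖ ^ 2) := by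
  have parseval := hasSum_norm_partialFourier_sq hAB hg σ
  rw [← integral_integral_norm_sq hg hgs hsupp, ← integral_const_mul]
  refine hasSum_integral_of_dominated_convergence
    (fun m t => ‖partialFourier A B g (2 * π * m / (B - A) + σ) t‖ ^ 2)
    (fun m => ((continuous_partialFourier hg _).norm.pow 2).aestronglyMeasurable)
    (fun m => ae_of_all _ fun t => by simp)
    (ae_of_all _ fun t => (parseval t).summable) ?_ (ae_of_all _ parseval)
  simp_rw [fun t => (parseval t).tsum_eq]
  exact (integrable_integral_norm_sq hg hgs).const_mul _

lemma hasDerivAt_snd_dY (hw : Differentiable ℝ w) (x t : ℝ) :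
    HasDerivAt (fun s => w (x, s)) (dY w (x, t)) t :=
  (hw (x, t)).hasFDerivAt.comp_hasDerivAt t ((hasDerivAt_const t x).prodMk (hasDerivAt_id t))

lemma hasDerivAt_fst_dX (hw : Differentiable ℝ w) (x t : ℝ) :
    HasDerivAt (fun s => w (s, t)) (dX w (x, t)) x :=
  (hw (x, t)).hasFDerivAt.comp_hasDerivAt x ((hasDerivAt_id x).prodMk (hasDerivAt_const x t))

lemma continuous_dX (hw : ContDiff ℝ 1 w) : Continuous (dX w) :=
  (hw.continuous_fderiv one_ne_zero).clm_apply continuous_const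

lemma continuous_dY (hw : ContDiff ℝ 1 w) : Continuous (dY w) :=
  (hw.continuous_fderiv one_ne_zero).clm_apply continuous_const

lemma hasDerivAt_partialFourier (hw : ContDiff ℝ 1 w) (hws : HasCompactSupport w) (ξ t : ℝ) :
    HasDerivAt (partialFourier A B w ξ) (partialFourier A B (dY w) ξ t) t := by
  have hwc := hw.continuous
  have hdY := continuous_dY hw
  obtain ⟨C, hC⟩ := (hws.fderiv_apply ℝ (0, 1)).exists_bound_of_continuous hdY
  refine (intervalIntegral.hasDerivAt_integral_of_dominated_loc_of_deriv_le (s := Set.univ)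
    (F' := fun t x => Complex.exp (-(Complex.I * ξ * x)) * dY w (x, t)) (bound := fun _ => C)
    univ_mem (.of_forall fun s => Continuous.aestronglyMeasurable (by fun_prop))
    (Continuous.intervalIntegrable (by fun_prop) _ _)
    (Continuous.aestronglyMeasurable (by fun_prop)) (ae_of_all _ fun x _ s _ => ?_)
    intervalIntegrable_const (ae_of_all _ fun x _ s _ => ?_)).2
  · rw [norm_mul, norm_cexp_neg_I_mul_mul, one_mul]
    exact hC _
  · exact (hasDerivAt_snd_dY hw.differentiable_one x s).const_mul _

lemma deriv_partialFourier (hw : ContDiff ℝ 1 w) (hws : HasCompactSupport w) (ξ : ℝ) :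
    deriv (partialFourier A B w ξ) = partialFourier A B (dY w) ξ :=
  deriv_eq (hasDerivAt_partialFourier hw hws ξ)

lemma contDiff_partialFourier (hw : ContDiff ℝ 1 w) (hws : HasCompactSupport w) (ξ : ℝ) :
    ContDiff ℝ 1 (partialFourier A B w ξ) := by
  rw [contDiff_one_iff_deriv, deriv_partialFourier hw hws]
  exact ⟨fun t => (hasDerivAt_partialFourier hw hws ξ t).differentiableAt,
    continuous_partialFourier (continuous_dY hw) ξ⟩

lemma partialFourier_dX (hw : ContDiff ℝ 1 w) (hA : ∀ t, w (A, t) = 0) (hB : ∀ t, w (B, t) = 0)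
    (ξ t : ℝ) : partialFourier A B (dX w) ξ t = Complex.I * ξ * partialFourier A B w ξ t := by
  have hdX := continuous_dX hw
  have hexp : ∀ x : ℝ, HasDerivAt (fun x : ℝ => Complex.exp (-(Complex.I * ξ * x)))
      (Complex.exp (-(Complex.I * ξ * x)) * -(Complex.I * ξ)) x := fun x => by
    simpa using (((hasDerivAt_id x).ofReal_comp).const_mul (Complex.I * ξ)).neg.cexp
  have parts := intervalIntegral.integral_mul_deriv_eq_deriv_mul (a := A) (b := B)
    (fun x _ => hexp x) (fun x _ => hasDerivAt_fst_dX hw.differentiable_one x t)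
    (Continuous.intervalIntegrable (by fun_prop) _ _)
    (Continuous.intervalIntegrable (by fun_prop) _ _)
  rw [hA, hB, mul_zero, mul_zero, sub_zero, zero_sub, ← intervalIntegral.integral_neg] at parts
  rw [partialFourier, parts, partialFourier, ← intervalIntegral.integral_const_mul]
  congr 1 with x
  ring

end PartialFourier

/-! ### The Landau form -/

section TestFunctions

variable {Ω : Set (ℝ × ℝ)} {w : ℝ × ℝ → ℂ}

lemma IsTestOn.contDiff_one (hw : IsTestOn Ω w) : ContDiff ℝ 1 w :=
  hw.1.of_le (by exact_mod_cast le_top)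

lemma IsTestOn.support_subset (hw : IsTestOn Ω w) : Function.support w ⊆ Ω :=
  (subset_tsupport w).trans hw.2.2

lemma IsTestOn.eq_zero {p : ℝ × ℝ} (hw : IsTestOn Ω w) (hp : p ∉ Ω) : w p = 0 :=
  not_not.1 fun h => hp (hw.support_subset h)

lemma IsTestOn.support_fderiv_apply_subset (hw : IsTestOn Ω w) (v : ℝ × ℝ) :
    Function.support (fun p => fderiv ℝ w p v) ⊆ Ω :=
  (subset_tsupport _).trans ((tsupport_fderiv_apply_subset ℝ v).trans hw.2.2)

lemma IsTestOn.dX_eq_zero {p : ℝ × ℝ} (hw : IsTestOn Ω w) (hp : p ∉ Ω) : dX w p = 0 :=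
  not_not.1 fun h => hp (hw.support_fderiv_apply_subset (1, 0) h)

lemma IsTestOn.dY_eq_zero {p : ℝ × ℝ} (hw : IsTestOn Ω w) (hp : p ∉ Ω) : dY w p = 0 :=
  not_not.1 fun h => hp (hw.support_fderiv_apply_subset (0, 1) h)

lemma IsTestOn.hasCompactSupport_dX (hw : IsTestOn Ω w) : HasCompactSupport (dX w) :=
  hw.2.1.fderiv_apply ℝ (1, 0)

lemma IsTestOn.hasCompactSupport_dY (hw : IsTestOn Ω w) : HasCompactSupport (dY w) :=
  hw.2.1.fderiv_apply ℝ (0, 1)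

end TestFunctions

section Landau

variable {A B D T κ t₀ b : ℝ} {J : Set ℝ} {w : ℝ × ℝ → ℂ}

/-- The kinetic momentum `κ (-i∂ₓ) + (t - t₀) b` in the first variable, in the Landau gauge. -/
def kineticX (κ t₀ b : ℝ) (w : ℝ × ℝ → ℂ) (p : ℝ × ℝ) : ℂ :=
  κ * (-Complex.I * dX w p) + ((p.2 - t₀) * b : ℝ) * w p

/-- The quadratic form of the Schrödinger operator with constant magnetic field `b`, the first
variable being rescaled by `κ`. -/
def landauForm (κ t₀ b : ℝ) (w : ℝ × ℝ → ℂ) : ℝ :=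
  ∫ p, (‖kineticX κ t₀ b w p‖ ^ 2 + ‖dY w p‖ ^ 2)

/-- The centre of the oscillator to which the Landau form reduces at frequency `ξ`. -/
def guidingCenter (κ t₀ b ξ : ℝ) : ℝ := t₀ - κ * ξ / b

lemma guidingCenter_add (hκ : κ ≠ 0) (hb : b ≠ 0) (ξ s : ℝ) :
    guidingCenter κ t₀ b (ξ + s * b / κ) = guidingCenter κ t₀ b ξ - s := by
  unfold guidingCenter
  field_simp
  ring

lemma continuous_kineticX (hw : ContDiff ℝ 1 w) : Continuous (kineticX κ t₀ b w) := by
  have := continuous_dX hw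
  have := hw.continuous
  unfold kineticX
  fun_prop

lemma IsTestOn.kineticX_eq_zero {Ω : Set (ℝ × ℝ)} {p : ℝ × ℝ} (hw : IsTestOn Ω w) (hp : p ∉ Ω) :
    kineticX κ t₀ b w p = 0 := by
  simp [kineticX, hw.eq_zero hp, hw.dX_eq_zero hp]

lemma IsTestOn.hasCompactSupport_kineticX {Ω : Set (ℝ × ℝ)} (hw : IsTestOn Ω w) :
    HasCompactSupport (kineticX κ t₀ b w) := by
  refine .add (.mul_left (f := fun _ => (κ : ℂ)) ?_) hw.2.1.mul_left
  exact hw.hasCompactSupport_dX.mul_left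

lemma partialFourier_kineticX (hw : ContDiff ℝ 1 w) (hA : ∀ t, w (A, t) = 0)
    (hB : ∀ t, w (B, t) = 0) (ξ t : ℝ) :
    partialFourier A B (kineticX κ t₀ b w) ξ t =
      ((κ * ξ + (t - t₀) * b : ℝ) : ℂ) * partialFourier A B w ξ t := by
  have freeze : partialFourier A B (kineticX κ t₀ b w) ξ t = partialFourier A B
      ((-(κ * Complex.I)) • dX w + (((t - t₀) * b : ℝ) : ℂ) • w) ξ t := by
    unfold partialFourier
    congr 1 with x
    simp only [kineticX, Pi.add_apply, Pi.smul_apply, smul_eq_mul]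
    ring
  rw [freeze, partialFourier_add ((continuous_dX hw).const_smul _) (hw.continuous.const_smul _),
    partialFourier_smul, partialFourier_smul, partialFourier_dX hw hA hB]
  push_cast
  linear_combination (-(κ : ℂ) * ξ * partialFourier A B w ξ t) * Complex.I_sq

lemma oscillatorEnergy_partialFourier (hw : IsTestOn (Set.Ioo A B ×ˢ J) w) (hb : b ≠ 0) (ξ : ℝ) :
    oscillatorEnergy b (guidingCenter κ t₀ b ξ) (partialFourier A B w ξ) =
      (∫ t, ‖partialFourier A B (dY w) ξ t‖ ^ 2) +
        ∫ t, ‖partialFourier A B (kineticX κ t₀ b w) ξ t‖ ^ 2 := by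
  have hw1 := hw.contDiff_one
  rw [← integral_add
    (integrable_norm_partialFourier_sq (continuous_dY hw1) hw.hasCompactSupport_dY ξ)
    (integrable_norm_partialFourier_sq (continuous_kineticX hw1) hw.hasCompactSupport_kineticX ξ),
    oscillatorEnergy, deriv_partialFourier hw1 hw.2.1]
  congr 1 with t
  rw [partialFourier_kineticX hw1 (fun t => hw.eq_zero (by simp)) (fun t => hw.eq_zero (by simp)),
    norm_mul, Complex.norm_real, mul_pow, Real.norm_eq_abs, sq_abs, ← mul_pow b]
  congr 3
  unfold guidingCenter
  field_simp
  ring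

lemma hasSum_oscillatorEnergy_partialFourier (hAB : A < B) (hb : b ≠ 0)
    (hw : IsTestOn (Set.Ioo A B ×ˢ J) w) (σ : ℝ) :
    HasSum (fun m : ℤ => oscillatorEnergy b (guidingCenter κ t₀ b (2 * π * m / (B - A) + σ))
        (partialFourier A B w (2 * π * m / (B - A) + σ)))
      ((B - A) * landauForm κ t₀ b w) := by
  have hw1 := hw.contDiff_one
  have mem_of_ne {u : ℝ × ℝ → ℂ} (hu : ∀ p ∉ Set.Ioo A B ×ˢ J, u p = 0) (p : ℝ × ℝ)
      (hp : u p ≠ 0) : p.1 ∈ Set.Ioc A B :=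
    Set.Ioo_subset_Ioc_self (not_not.1 fun h => hp (hu p fun h' => h h'.1))
  have parseval_dY := hasSum_integral_norm_partialFourier_sq hAB (continuous_dY hw1)
    hw.hasCompactSupport_dY (mem_of_ne fun p => hw.dY_eq_zero) σ
  have parseval_kineticX := hasSum_integral_norm_partialFourier_sq hAB
    (continuous_kineticX (κ := κ) (t₀ := t₀) (b := b) hw1) hw.hasCompactSupport_kineticX
    (mem_of_ne fun p => hw.kineticX_eq_zero) σ
  have form_eq : landauForm κ t₀ b w =
      (∫ p, ‖dY w p‖ ^ 2) + ∫ p, ‖kineticX κ t₀ b w p‖ ^ 2 := by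
    rw [landauForm, add_comm, integral_add]
    · exact integrable_norm_sq_of_hasCompactSupport (continuous_kineticX hw1)
        hw.hasCompactSupport_kineticX
    · exact integrable_norm_sq_of_hasCompactSupport (continuous_dY hw1) hw.hasCompactSupport_dY
  simp_rw [oscillatorEnergy_partialFourier hw hb, form_eq, mul_add]
  exact parseval_dY.add parseval_kineticX

end Landau

/-! ### Tiling a strip by magnetic translates -/

section Tiling

variable {A B D T κ t₀ b μ : ℝ} {n : ℕ}

/-- The Fourier transform at `ξ` of the magnetic translate of `w` by `s` in the second variable:
the translate is accompanied by the gauge factor `exp (-i s b x / κ)`, which shifts the frequency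
so that the guiding centre follows the translation. -/
def magneticShift (A B κ b s : ℝ) (w : ℝ × ℝ → ℂ) (ξ t : ℝ) : ℂ :=
  partialFourier A B w (ξ + s * b / κ) (t - s)

/-- The Fourier transform at `ξ` of the function on a strip of height `n T` assembled from the
magnetic translates of `v j` by `j T`. At a fixed frequency all tiles see the same oscillator. -/
def magneticTile (A B T κ b : ℝ) (v : Fin n → ℝ × ℝ → ℂ) (ξ t : ℝ) : ℂ :=
  ∑ j : Fin n, magneticShift A B κ b (j * T) (v j) ξ t

lemma contDiff_magneticShift {w : ℝ × ℝ → ℂ} (hw : ContDiff ℝ 1 w) (hws : HasCompactSupport w)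
    (s ξ : ℝ) : ContDiff ℝ 1 (magneticShift A B κ b s w ξ) :=
  (contDiff_partialFourier hw hws _).comp (contDiff_id.sub contDiff_const)

lemma hasCompactSupport_magneticShift {w : ℝ × ℝ → ℂ} (hws : HasCompactSupport w) (s ξ : ℝ) :
    HasCompactSupport (magneticShift A B κ b s w ξ) :=
  (hasCompactSupport_partialFourier hws _).comp_homeomorph (Homeomorph.subRight s)

lemma integral_norm_magneticShift_sq (w : ℝ × ℝ → ℂ) (s ξ : ℝ) :
    ∫ t, ‖magneticShift A B κ b s w ξ t‖ ^ 2 =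
      ∫ t, ‖partialFourier A B w (ξ + s * b / κ) t‖ ^ 2 :=
  integral_sub_right_eq_self (fun t => ‖partialFourier A B w (ξ + s * b / κ) t‖ ^ 2) s

lemma oscillatorEnergy_magneticShift (hκ : κ ≠ 0) (hb : b ≠ 0) (w : ℝ × ℝ → ℂ) (s ξ : ℝ) :
    oscillatorEnergy b (guidingCenter κ t₀ b ξ) (magneticShift A B κ b s w ξ) =
      oscillatorEnergy b (guidingCenter κ t₀ b (ξ + s * b / κ))
        (partialFourier A B w (ξ + s * b / κ)) := by
  rw [guidingCenter_add hκ hb, ← oscillatorEnergy_comp_sub]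
  rfl

lemma IsTestOn.support_magneticShift_subset {w : ℝ × ℝ → ℂ} {I : Set ℝ}
    (hw : IsTestOn (I ×ˢ Set.Ioo D (D + T)) w) (s ξ : ℝ) :
    Function.support (magneticShift A B κ b s w ξ) ⊆ Set.Ioo (D + s) (D + T + s) := by
  intro t ht
  obtain ⟨p, hp, hpt⟩ := support_partialFourier_subset A B w _ ht
  have mem_tile : t - s ∈ Set.Ioo D (D + T) := hpt ▸ (hw.support_subset hp).2
  exact ⟨by linarith [mem_tile.1], by linarith [mem_tile.2]⟩

lemma pairwise_disjoint_Ioo_add_nat_mul (D T : ℝ) :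
    Pairwise fun i j : ℕ => Disjoint (Set.Ioo (D + i * T) (D + T + i * T))
      (Set.Ioo (D + j * T) (D + T + j * T)) := by
  intro i j hij
  rw [Set.disjoint_left]
  rintro t ⟨hi, hi'⟩ ⟨hj, hj'⟩
  have hT : 0 < T := by linarith
  have lt_succ : (i : ℝ) < j + 1 := lt_of_mul_lt_mul_right (by linarith) hT.le
  have gt_succ : (j : ℝ) < i + 1 := lt_of_mul_lt_mul_right (by linarith) hT.le
  norm_cast at lt_succ gt_succ
  omega

section TestFamily

variable {v : Fin n → ℝ × ℝ → ℂ}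

lemma pairwise_disjoint_support_magneticShift {I : Set ℝ}
    (hv : ∀ j, IsTestOn (I ×ˢ Set.Ioo D (D + T)) (v j)) (ξ : ℝ) :
    Pairwise fun i j : Fin n =>
      Disjoint (Function.support (magneticShift A B κ b (i * T) (v i) ξ))
        (Function.support (magneticShift A B κ b (j * T) (v j) ξ)) := fun i j hij =>
  (pairwise_disjoint_Ioo_add_nat_mul D T (Fin.val_ne_of_ne hij)).mono
    ((hv i).support_magneticShift_subset _ ξ) ((hv j).support_magneticShift_subset _ ξ)

lemma contDiff_magneticTile (hv : ∀ j, ContDiff ℝ 1 (v j)) (hvs : ∀ j, HasCompactSupport (v j))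
    (ξ : ℝ) : ContDiff ℝ 1 (magneticTile A B T κ b v ξ) :=
  ContDiff.sum fun j _ => contDiff_magneticShift (hv j) (hvs j) _ ξ

lemma support_magneticTile_subset {I : Set ℝ}
    (hv : ∀ j, IsTestOn (I ×ˢ Set.Ioo D (D + T)) (v j)) (ξ : ℝ) :
    Function.support (magneticTile A B T κ b v ξ) ⊆ Set.Icc D (D + n * T) := by
  intro t ht
  obtain ⟨j, -, hj⟩ := Finset.exists_ne_zero_of_sum_ne_zero ht
  obtain ⟨lower, upper⟩ := (hv j).support_magneticShift_subset _ ξ hj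
  have hT : 0 ≤ T := by linarith
  have hjn : ((j : ℕ) : ℝ) + 1 ≤ n := by exact_mod_cast j.2
  have top_le := mul_le_mul_of_nonneg_right hjn hT
  have bottom_nonneg : 0 ≤ ((j : ℕ) : ℝ) * T := by positivity
  constructor <;> linarith

lemma hasCompactSupport_magneticTile {I : Set ℝ}
    (hv : ∀ j, IsTestOn (I ×ˢ Set.Ioo D (D + T)) (v j)) (ξ : ℝ) :
    HasCompactSupport (magneticTile A B T κ b v ξ) :=
  .of_support_subset_isCompact isCompact_Icc (support_magneticTile_subset hv ξ)

lemma integral_norm_magneticTile_sq {I : Set ℝ}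
    (hv : ∀ j, IsTestOn (I ×ˢ Set.Ioo D (D + T)) (v j)) (ξ : ℝ) :
    ∫ t, ‖magneticTile A B T κ b v ξ t‖ ^ 2 =
      ∑ j : Fin n, ∫ t, ‖partialFourier A B (v j) (ξ + j * T * b / κ) t‖ ^ 2 := by
  unfold magneticTile
  rw [integral_norm_sum_sq (fun j => integrable_norm_sq_of_hasCompactSupport
      (contDiff_magneticShift (hv j).contDiff_one (hv j).2.1 _ ξ).continuous
      (hasCompactSupport_magneticShift (hv j).2.1 _ ξ))
    (pairwise_disjoint_support_magneticShift hv ξ)]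
  simp only [integral_norm_magneticShift_sq]

lemma oscillatorEnergy_magneticTile (hκ : κ ≠ 0) (hb : b ≠ 0) {I : Set ℝ}
    (hv : ∀ j, IsTestOn (I ×ˢ Set.Ioo D (D + T)) (v j)) (ξ : ℝ) :
    oscillatorEnergy b (guidingCenter κ t₀ b ξ) (magneticTile A B T κ b v ξ) =
      ∑ j : Fin n, oscillatorEnergy b (guidingCenter κ t₀ b (ξ + j * T * b / κ))
        (partialFourier A B (v j) (ξ + j * T * b / κ)) := by
  unfold magneticTile
  rw [oscillatorEnergy_sum _ _
    (fun j => contDiff_magneticShift (hv j).contDiff_one (hv j).2.1 _ ξ)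
    (fun j => hasCompactSupport_magneticShift (hv j).2.1 _ ξ)
    (pairwise_disjoint_support_magneticShift hv ξ)]
  simp only [oscillatorEnergy_magneticShift hκ hb]

lemma mul_integral_norm_magneticTile_sq_le {I : Set ℝ} {l : ℕ} {ξ : ℝ}
    (hv : ∀ j, IsTestOn (I ×ˢ Set.Ioo D (D + T)) (v j)) (hμ : μ ≤ (2 * l + 1) * |b|)
    (hmode : (∀ k < l, gaussianMoment |b| (guidingCenter κ t₀ b ξ) k
        (magneticTile A B T κ b v ξ) = 0) ∨
      ∀ t ∈ Set.Icc D (D + n * T), μ ≤ b ^ 2 * (t - guidingCenter κ t₀ b ξ) ^ 2) :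
    μ * ∫ t, ‖magneticTile A B T κ b v ξ t‖ ^ 2 ≤
      oscillatorEnergy b (guidingCenter κ t₀ b ξ) (magneticTile A B T κ b v ξ) := by
  have smooth : ContDiff ℝ 1 (magneticTile A B T κ b v ξ) :=
    contDiff_magneticTile (fun j => (hv j).contDiff_one) (fun j => (hv j).2.1) ξ
  have compact : HasCompactSupport (magneticTile A B T κ b v ξ) :=
    hasCompactSupport_magneticTile hv ξ
  rcases hmode with moments_eq_zero | far
  · rw [← oscillatorEnergy_abs]
    refine le_trans ?_ (mul_integral_norm_sq_le_oscillatorEnergy_of_gaussianMoment_eq_zero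
      (abs_nonneg b) l smooth compact moments_eq_zero)
    gcongr
  · exact mul_integral_norm_sq_le_oscillatorEnergy smooth compact
      fun t ht => far t (support_magneticTile_subset hv ξ ht)

lemma mul_sum_integral_norm_sq_le_sum_landauForm (hAB : A < B) (hκ : κ ≠ 0) (hb : b ≠ 0)
    (hv : ∀ j, IsTestOn (Set.Ioo A B ×ˢ Set.Ioo D (D + T)) (v j))
    (hmode : ∀ m : ℤ, μ * ∫ t, ‖magneticTile A B T κ b v (2 * π * m / (B - A)) t‖ ^ 2 ≤
      oscillatorEnergy b (guidingCenter κ t₀ b (2 * π * m / (B - A)))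
        (magneticTile A B T κ b v (2 * π * m / (B - A)))) :
    μ * ∑ j, ∫ p, ‖v j p‖ ^ 2 ≤ ∑ j, landauForm κ t₀ b (v j) := by
  simp only [integral_norm_magneticTile_sq hv, oscillatorEnergy_magneticTile hκ hb hv] at hmode
  have sum_norm := hasSum_sum (s := Finset.univ) fun (j : Fin n) _ =>
    hasSum_integral_norm_partialFourier_sq hAB (hv j).1.continuous (hv j).2.1
      (fun p hp => Set.Ioo_subset_Ioc_self ((hv j).support_subset hp).1) (j * T * b / κ)
  have sum_energy := hasSum_sum (s := Finset.univ) fun (j : Fin n) _ =>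
    hasSum_oscillatorEnergy_partialFourier (κ := κ) (t₀ := t₀) hAB hb (hv j) (j * T * b / κ)
  have le_sum := hasSum_le hmode (sum_norm.mul_left μ) sum_energy
  rw [← Finset.mul_sum, ← Finset.mul_sum, mul_left_comm] at le_sum
  exact le_of_mul_le_mul_left le_sum (sub_pos.2 hAB)

end TestFamily

lemma exists_ne_zero_forall_eq_zero {𝕜 E ι : Type*} [Field 𝕜] [AddCommGroup E] [Module 𝕜 E]
    [Fintype ι] (Φ : ι → E → 𝕜) (hΦ : ∀ i, IsLinearMap 𝕜 (Φ i))
    (hcard : Fintype.card ι < Module.finrank 𝕜 E) : ∃ v, v ≠ 0 ∧ ∀ i, Φ i v = 0 := by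
  have : FiniteDimensional 𝕜 E := Module.finite_of_finrank_pos (by omega)
  have ker_ne_bot : LinearMap.ker (LinearMap.pi fun i => (hΦ i).mk' (Φ i)) ≠ ⊥ :=
    LinearMap.ker_ne_bot_of_finrank_lt (by rwa [Module.finrank_pi])
  obtain ⟨v, hv, hv0⟩ := Submodule.exists_mem_ne_zero_of_ne_bot ker_ne_bot
  exact ⟨v, hv0, congrFun (LinearMap.mem_ker.1 hv)⟩

lemma magneticTile_add {v w : Fin n → ℝ × ℝ → ℂ} (hv : ∀ j, Continuous (v j))
    (hw : ∀ j, Continuous (w j)) (ξ : ℝ) :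
    magneticTile A B T κ b (v + w) ξ =
      magneticTile A B T κ b v ξ + magneticTile A B T κ b w ξ := by
  ext t
  simp only [magneticTile, magneticShift, Pi.add_apply, partialFourier_add (hv _) (hw _),
    Finset.sum_add_distrib]

lemma magneticTile_smul (z : ℂ) (v : Fin n → ℝ × ℝ → ℂ) (ξ : ℝ) :
    magneticTile A B T κ b (z • v) ξ = z • magneticTile A B T κ b v ξ := by
  ext t
  simp only [magneticTile, magneticShift, Pi.smul_apply, partialFourier_smul, smul_eq_mul,
    Finset.mul_sum]

lemma isLinearMap_gaussianMoment_magneticTile {I : Set ℝ} {V : Submodule ℂ (ℝ × ℝ → ℂ)}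
    (hV : ∀ u ∈ V, IsTestOn (I ×ˢ Set.Ioo D (D + T)) u) (β c ξ : ℝ) (k : ℕ) :
    IsLinearMap ℂ fun v : Fin n → V =>
      gaussianMoment β c k (magneticTile A B T κ b (fun j => (v j : ℝ × ℝ → ℂ)) ξ) where
  map_add v w := by
    have cont (v : Fin n → V) : Continuous (magneticTile A B T κ b (fun j => (v j).1) ξ) :=
      (contDiff_magneticTile (fun j => (hV _ (v j).2).contDiff_one)
        (fun j => (hV _ (v j).2).2.1) ξ).continuous
    have compact (v : Fin n → V) :
        HasCompactSupport (magneticTile A B T κ b (fun j => (v j).1) ξ) :=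
      hasCompactSupport_magneticTile (fun j => hV _ (v j).2) ξ
    rw [← gaussianMoment_add (cont v) (compact v) (cont w) (compact w), ← magneticTile_add
      (fun j => (hV _ (v j).2).1.continuous) (fun j => (hV _ (w j).2).1.continuous)]
    rfl
  map_smul z v := by
    rw [← gaussianMoment_smul, ← magneticTile_smul]
    rfl

lemma landauForm_zero : landauForm κ t₀ b 0 = 0 := by
  simp [landauForm, kineticX, dX, dY]

lemma sum_landauForm_lt {V : Submodule ℂ (ℝ × ℝ → ℂ)} {v : Fin n → V} (hv : v ≠ 0)
    (hq : ∀ u ∈ V, u ≠ 0 → landauForm κ t₀ b u < μ * ∫ p, ‖u p‖ ^ 2) :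
    ∑ j, landauForm κ t₀ b (v j) < μ * ∑ j, ∫ p, ‖(v j : ℝ × ℝ → ℂ) p‖ ^ 2 := by
  obtain ⟨i, hi⟩ := Function.ne_iff.1 hv
  rw [Finset.mul_sum]
  refine Finset.sum_lt_sum (fun j _ => ?_)
    ⟨i, Finset.mem_univ i, hq _ (v i).2 (by simpa using hi)⟩
  by_cases hj : v j = 0
  · simp [hj, landauForm_zero]
  · exact (hq _ (v j).2 (by simpa using hj)).le

/- The Gaussian moments of order `< l` at the frequencies in `M` are `M.card * l` linear
functionals on the `n`-tuples of elements of `V`, and only the zero tuple is annihilated by all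
of them. -/
lemma mul_finrank_le_card_mul (hAB : A < B) (hκ : κ ≠ 0) (hb : b ≠ 0) (n : ℕ) {l : ℕ}
    (hμ : μ ≤ (2 * l + 1) * |b|) {V : Submodule ℂ (ℝ × ℝ → ℂ)}
    (hV : ∀ u ∈ V, IsTestOn (Set.Ioo A B ×ˢ Set.Ioo D (D + T)) u)
    (hq : ∀ u ∈ V, u ≠ 0 → landauForm κ t₀ b u < μ * ∫ p, ‖u p‖ ^ 2) {M : Finset ℤ}
    (hM : ∀ m ∉ M, ∀ t ∈ Set.Icc D (D + n * T),
      μ ≤ b ^ 2 * (t - guidingCenter κ t₀ b (2 * π * m / (B - A))) ^ 2) :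
    n * Module.finrank ℂ V ≤ M.card * l := by
  by_cases hfin : Module.Finite ℂ V; swap
  · simp [Module.finrank_of_not_finite hfin]
  by_contra! hlt
  have hcard : Fintype.card (M × Fin l) < Module.finrank ℂ (Fin n → V) := by
    simpa [Module.finrank_pi_fintype] using hlt
  obtain ⟨v, hv0, hv⟩ := exists_ne_zero_forall_eq_zero
    (fun (mk : M × Fin l) (v : Fin n → V) =>
      gaussianMoment |b| (guidingCenter κ t₀ b (2 * π * mk.1 / (B - A))) mk.2
        (magneticTile A B T κ b (fun j => (v j).1) (2 * π * mk.1 / (B - A))))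
    (fun mk => isLinearMap_gaussianMoment_magneticTile hV _ _ _ _) hcard
  refine (sum_landauForm_lt hv0 hq).not_ge (mul_sum_integral_norm_sq_le_sum_landauForm hAB hκ hb
    (fun j => hV _ (v j).2) fun m =>
      mul_integral_norm_magneticTile_sq_le (fun j => hV _ (v j).2) hμ ?_)
  by_cases hm : m ∈ M
  · exact .inl fun k hk => hv (⟨m, hm⟩, ⟨k, hk⟩)
  · exact .inr (hM m hm)

lemma exists_finset_int_lt_abs_mul_sub {δ H : ℝ} (hδ : δ ≠ 0) (hH : 0 ≤ H) (z : ℝ) :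
    ∃ M : Finset ℤ, (M.card : ℝ) ≤ 2 * H / |δ| + 1 ∧ ∀ m ∉ M, H < |m * δ - z| := by
  have hδ' : 0 < |δ| := abs_pos.2 hδ
  refine ⟨Finset.Icc ⌈z / δ - H / |δ|⌉ ⌊z / δ + H / |δ|⌋, ?_, fun m hm => ?_⟩
  · have card_eq : ((Finset.Icc ⌈z / δ - H / |δ|⌉ ⌊z / δ + H / |δ|⌋).card : ℝ) =
        max ((⌊z / δ + H / |δ|⌋ : ℝ) + 1 - ⌈z / δ - H / |δ|⌉) 0 := by
      rw [Int.card_Icc]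
      exact_mod_cast congrArg (Int.cast (R := ℝ)) (Int.toNat_eq_max _)
    rw [card_eq, mul_div_assoc]
    exact max_le (by linarith [Int.floor_le (z / δ + H / |δ|), Int.le_ceil (z / δ - H / |δ|)])
      (by positivity)
  · have far : H / |δ| < |m - z / δ| := by
      by_contra! hle
      obtain ⟨hlo, hhi⟩ := abs_le.1 hle
      exact hm (Finset.mem_Icc.2 ⟨Int.ceil_le.2 (by linarith), Int.le_floor.2 (by linarith)⟩)
    have factor : m * δ - z = (m - z / δ) * δ := by field_simp
    rwa [factor, abs_mul, ← div_lt_iff₀ hδ']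

lemma le_of_forall_nat_mul_le_add {x y c : ℝ} (h : ∀ n : ℕ, n * x ≤ n * y + c) : x ≤ y := by
  by_contra! hlt
  obtain ⟨n, hn⟩ := exists_nat_gt (c / (x - y))
  rw [div_lt_iff₀ (sub_pos.2 hlt)] at hn
  linarith [h n]

lemma exists_finset_forall_notMem_le_sq_guidingCenter (hAB : A < B) (hκ : 0 < κ) (hb : b ≠ 0)
    {L : ℝ} (hL : 0 ≤ L) (D t₀ μ : ℝ) :
    ∃ M : Finset ℤ, (M.card : ℝ) ≤ (L + 2 * (√μ / |b|)) * ((B - A) * |b| / (2 * π * κ)) + 1 ∧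
      ∀ m ∉ M, ∀ t ∈ Set.Icc D (D + L),
        μ ≤ b ^ 2 * (t - guidingCenter κ t₀ b (2 * π * m / (B - A))) ^ 2 := by
  have hBA : 0 < B - A := sub_pos.2 hAB
  obtain ⟨M, hcard, hM⟩ := exists_finset_int_lt_abs_mul_sub (δ := 2 * π * κ / ((B - A) * b))
    (H := L / 2 + √μ / |b|) (by positivity) (by positivity) (t₀ - (D + L / 2))
  refine ⟨M, hcard.trans_eq ?_, fun m hm t ht => ?_⟩
  · rw [abs_div, abs_mul (B - A), abs_of_pos hBA, abs_of_pos (by positivity : 0 < 2 * π * κ)]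
    field_simp
  · have center_eq : m * (2 * π * κ / ((B - A) * b)) - (t₀ - (D + L / 2)) =
        (D + L / 2 - t) + (t - guidingCenter κ t₀ b (2 * π * m / (B - A))) := by
      unfold guidingCenter
      field_simp
      ring
    have dist_mid : |D + L / 2 - t| ≤ L / 2 :=
      abs_le.2 ⟨by linarith [ht.2], by linarith [ht.1]⟩
    have dist_center : √μ / |b| ≤ |t - guidingCenter κ t₀ b (2 * π * m / (B - A))| := by
      have far := hM m hm
      rw [center_eq] at far
      linarith [abs_add_le (D + L / 2 - t) (t - guidingCenter κ t₀ b (2 * π * m / (B - A)))]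
    rw [div_le_iff₀' (abs_pos.2 hb), ← abs_mul] at dist_center
    rw [← mul_pow, ← sq_abs]
    exact (Real.sqrt_le_iff.1 dist_center).2

/- Tiling costs a boundary layer whose size does not depend on the number `n` of tiles; dividing
by `n` and letting `n → ∞` leaves the sharp constant. -/
theorem finrank_le_of_landauForm_lt (hAB : A < B) (hT : 0 ≤ T) (hκ : 0 < κ) (hb : b ≠ 0) {l : ℕ}
    (hμ : μ ≤ (2 * l + 1) * |b|) {V : Submodule ℂ (ℝ × ℝ → ℂ)}
    (hV : ∀ u ∈ V, IsTestOn (Set.Ioo A B ×ˢ Set.Ioo D (D + T)) u)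
    (hq : ∀ u ∈ V, u ≠ 0 → landauForm κ t₀ b u < μ * ∫ p, ‖u p‖ ^ 2) :
    (Module.finrank ℂ V : ℝ) ≤ T * (B - A) * |b| / (2 * π * κ) * l := by
  refine le_of_forall_nat_mul_le_add
    (c := (2 * (√μ / |b|) * ((B - A) * |b| / (2 * π * κ)) + 1) * l) fun n => ?_
  obtain ⟨M, hcard, hM⟩ := exists_finset_forall_notMem_le_sq_guidingCenter hAB hκ hb
    (by positivity : 0 ≤ n * T) D t₀ μ
  calc (n : ℝ) * Module.finrank ℂ V
      ≤ M.card * l := by exact_mod_cast mul_finrank_le_card_mul hAB hκ.ne' hb n hμ hV hq hM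
    _ ≤ ((n * T + 2 * (√μ / |b|)) * ((B - A) * |b| / (2 * π * κ)) + 1) * l := by gcongr
    _ = n * (T * (B - A) * |b| / (2 * π * κ) * l) +
        (2 * (√μ / |b|) * ((B - A) * |b| / (2 * π * κ)) + 1) * l := by ring

end Tiling

/-! ### Variation of the magnetic field -/

section Field

variable {A₁ A₂ : ℝ × ℝ → ℝ} {C₀ : ℝ}

lemma isOpen_UHP : IsOpen UHP := isOpen_lt continuous_const continuous_snd

lemma contDiffOn_fieldB (h₁ : ContDiffOn ℝ 2 A₁ UHP) (h₂ : ContDiffOn ℝ 2 A₂ UHP) :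
    ContDiffOn ℝ 1 (fieldB A₁ A₂) UHP := by
  have contDiffOn_fderiv {A : ℝ × ℝ → ℝ} (hA : ContDiffOn ℝ 2 A UHP) :
      ContDiffOn ℝ 1 (fderiv ℝ A) UHP := hA.fderiv_of_isOpen isOpen_UHP (by norm_num)
  exact (contDiff_snd.pow 2).contDiffOn.mul (((contDiffOn_fderiv h₂).clm_apply contDiffOn_const).sub
    ((contDiffOn_fderiv h₁).clm_apply contDiffOn_const))

lemma continuous_fieldB_exp (h₁ : ContDiffOn ℝ 2 A₁ UHP) (h₂ : ContDiffOn ℝ 2 A₂ UHP) :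
    Continuous fun p : ℝ × ℝ => fieldB A₁ A₂ (p.1, exp p.2) :=
  (contDiffOn_fieldB h₁ h₂).continuousOn.comp_continuous (by fun_prop) fun p => exp_pos p.2

lemma norm_sub_le_of_norm_deriv_le_mul_add_one {E : Type*} [NormedAddCommGroup E]
    [NormedSpace ℝ E] {φ φ' : ℝ → E} {K : ℝ} (hK : 0 ≤ K)
    (hφ : ∀ s ∈ Set.Icc (0 : ℝ) 1, HasDerivAt φ (φ' s) s)
    (hbound : ∀ s ∈ Set.Icc (0 : ℝ) 1, ‖φ' s‖ ≤ K * (‖φ s‖ + 1)) :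
    ‖φ 1 - φ 0‖ ≤ (‖φ 0‖ + 1) * (exp K - 1) := by
  have gronwall := norm_le_gronwallBound_of_norm_deriv_right_le (f := fun s => φ s - φ 0)
    (f' := φ') (δ := 0) (K := K) (ε := K * (‖φ 0‖ + 1)) (a := 0) (b := 1)
    (fun s hs => ((hφ s hs).sub_const _).continuousAt.continuousWithinAt)
    (fun s hs => ((hφ s ⟨hs.1, hs.2.le⟩).sub_const _).hasDerivWithinAt) (by simp)
    (fun s hs => by
      refine (hbound s ⟨hs.1, hs.2.le⟩).trans ?_
      rw [← mul_add]
      refine mul_le_mul_of_nonneg_left ?_ hK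
      linarith [norm_le_norm_sub_add (φ s) (φ 0)]) 1 (by simp)
  refine gronwall.trans_eq ?_
  rcases hK.eq_or_lt with rfl | hK
  · simp [gronwallBound_K0]
  · rw [gronwallBound_of_K_ne_0 hK.ne', mul_div_cancel_left₀ _ hK.ne']
    simp

lemma H2.nonneg (hH : H2 C₀ A₁ A₂) : 0 ≤ C₀ := by
  have bound := hH (0, 1) (by simp [UHP])
  refine nonneg_of_mul_nonneg_left (le_trans (by positivity) bound) ?_
  rw [intenB]
  positivity

lemma H2.mul_abs_fderiv_fieldB_le (hH : H2 C₀ A₁ A₂) {p : ℝ × ℝ} (hp : p ∈ UHP) (v : ℝ × ℝ) :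
    p.2 * |fderiv ℝ (fieldB A₁ A₂) p v| ≤ (|v.1| + |v.2|) * (C₀ * (intenB A₁ A₂ p + 1)) := by
  set P := dXr (fieldB A₁ A₂) p
  set Q := dYr (fieldB A₁ A₂) p
  have hp0 : 0 < p.2 := hp
  have apply_eq : fderiv ℝ (fieldB A₁ A₂) p v = v.1 * P + v.2 * Q := by
    have decomp : v = v.1 • ((1, 0) : ℝ × ℝ) + v.2 • (0, 1) := by ext <;> simp
    conv_lhs => rw [decomp, map_add, map_smul, map_smul]
    rfl
  have hP : |P| ≤ √(P ^ 2 + Q ^ 2) := Real.abs_le_sqrt (by linarith [sq_nonneg Q])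
  have hQ : |Q| ≤ √(P ^ 2 + Q ^ 2) := Real.abs_le_sqrt (by linarith [sq_nonneg P])
  calc p.2 * |fderiv ℝ (fieldB A₁ A₂) p v|
      ≤ p.2 * (|v.1| * √(P ^ 2 + Q ^ 2) + |v.2| * √(P ^ 2 + Q ^ 2)) := by
        rw [apply_eq]
        grw [abs_add_le, abs_mul, abs_mul, hP, hQ]
    _ = (|v.1| + |v.2|) * (p.2 * √(P ^ 2 + Q ^ 2)) := by ring
    _ ≤ (|v.1| + |v.2|) * (C₀ * (intenB A₁ A₂ p + 1)) :=
        mul_le_mul_of_nonneg_left (hH p hp) (by positivity)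

/- Along `s ↦ (x₀ + s (x - x₀), e ^ (t₀ + s (r - t₀)))` the hypothesis (H2) becomes a linear
differential inequality for the field, to which Grönwall's lemma applies. -/
lemma H2.abs_fieldB_sub_le (hH : H2 C₀ A₁ A₂) (h₁ : ContDiffOn ℝ 2 A₁ UHP)
    (h₂ : ContDiffOn ℝ 2 A₂ UHP) (x₀ t₀ x r : ℝ) :
    |fieldB A₁ A₂ (x, exp r) - fieldB A₁ A₂ (x₀, exp t₀)| ≤
      (|fieldB A₁ A₂ (x₀, exp t₀)| + 1) *
        (exp (C₀ * (exp |r - t₀| * (|x - x₀| / exp t₀) + |r - t₀|)) - 1) := by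
  set y : ℝ → ℝ := fun s => exp (t₀ + s * (r - t₀)) with hy
  set γ : ℝ → ℝ × ℝ := fun s => (x₀ + s * (x - x₀), y s) with hγ
  have γ_mem (s : ℝ) : γ s ∈ UHP := exp_pos _
  have deriv_γ (s : ℝ) : HasDerivAt γ (x - x₀, y s * (r - t₀)) s := by
    refine HasDerivAt.prodMk ?_ ?_
    · simpa using ((hasDerivAt_id s).mul_const (x - x₀)).const_add x₀
    · simpa using (((hasDerivAt_id s).mul_const (r - t₀)).const_add t₀).exp
  have deriv_field (s : ℝ) : HasDerivAt (fun s => fieldB A₁ A₂ (γ s))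
      (fderiv ℝ (fieldB A₁ A₂) (γ s) (x - x₀, y s * (r - t₀))) s :=
    (((contDiffOn_fieldB h₁ h₂).differentiableOn (by norm_num)).differentiableAt
      (isOpen_UHP.mem_nhds (γ_mem s))).hasFDerivAt.comp_hasDerivAt s (deriv_γ s)
  have y_ge {s : ℝ} (hs : s ∈ Set.Icc (0 : ℝ) 1) :
      1 ≤ y s * (exp |r - t₀| / exp t₀) := by
    have : |s * (r - t₀)| ≤ |r - t₀| := by
      rw [abs_mul, abs_of_nonneg hs.1]
      exact mul_le_of_le_one_left (abs_nonneg _) hs.2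
    rw [hy, ← exp_sub, ← exp_add, one_le_exp_iff]
    linarith [neg_abs_le (s * (r - t₀))]
  have bound (s : ℝ) (hs : s ∈ Set.Icc (0 : ℝ) 1) :
      ‖fderiv ℝ (fieldB A₁ A₂) (γ s) (x - x₀, y s * (r - t₀))‖ ≤
        C₀ * (exp |r - t₀| * (|x - x₀| / exp t₀) + |r - t₀|) *
          (‖fieldB A₁ A₂ (γ s)‖ + 1) := by
    have hys : 0 < y s := exp_pos _
    have hC₀ := hH.nonneg
    refine le_of_mul_le_mul_left ((hH.mul_abs_fderiv_fieldB_le (γ_mem s) _).trans ?_) hys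
    have scale : |x - x₀| + |y s * (r - t₀)| ≤
        y s * (exp |r - t₀| * (|x - x₀| / exp t₀) + |r - t₀|) := by
      rw [abs_mul, abs_of_pos hys]
      calc _ ≤ y s * (exp |r - t₀| / exp t₀) * |x - x₀| + y s * |r - t₀| := by
            gcongr
            exact le_mul_of_one_le_left (abs_nonneg _) (y_ge hs)
        _ = _ := by ring
    calc _ ≤ _ := mul_le_mul_of_nonneg_right scale (by rw [intenB]; positivity)
      _ = _ := by rw [intenB, Real.norm_eq_abs]; ring
  have gronwall := norm_sub_le_of_norm_deriv_le_mul_add_one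
    (mul_nonneg hH.nonneg (by positivity)) (fun s _ => deriv_field s) bound
  simpa [hγ, hy] using gronwall

lemma H2.abs_fieldB_sub_le_mul (hH : H2 C₀ A₁ A₂) (h₁ : ContDiffOn ℝ 2 A₁ UHP)
    (h₂ : ContDiffOn ℝ 2 A₂ UHP) {a₀ ε x₀ t₀ x r : ℝ} (hε : ε ≤ 1)
    (hsmall : 2 * C₀ * (a₀ + 1) * ε ≤ 1) (hβ : 1 ≤ |fieldB A₁ A₂ (x₀, exp t₀)|)
    (hx : |x - x₀| ≤ ε * a₀ * exp t₀) (hr : |r - t₀| ≤ ε / 2) :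
    |fieldB A₁ A₂ (x, exp r) - fieldB A₁ A₂ (x₀, exp t₀)| ≤
      8 * C₀ * (a₀ + 1) * ε * |fieldB A₁ A₂ (x₀, exp t₀)| := by
  have hC₀ := hH.nonneg
  have exp_le_two : exp |r - t₀| ≤ 2 := by
    have := (abs_le.1 (Real.abs_exp_sub_one_le (x := |r - t₀|) (by rw [abs_abs]; linarith))).2
    rw [abs_abs] at this
    linarith
  have rate_le : C₀ * (exp |r - t₀| * (|x - x₀| / exp t₀) + |r - t₀|) ≤
      2 * C₀ * (a₀ + 1) * ε := by
    have hx' : |x - x₀| / exp t₀ ≤ ε * a₀ := (div_le_iff₀ (exp_pos t₀)).2 hx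
    calc C₀ * (exp |r - t₀| * (|x - x₀| / exp t₀) + |r - t₀|)
        ≤ C₀ * (2 * (ε * a₀) + 2 * ε) := by
          gcongr
          linarith [abs_nonneg (r - t₀)]
      _ = 2 * C₀ * (a₀ + 1) * ε := by ring
  have rate_nonneg : 0 ≤ 2 * C₀ * (a₀ + 1) * ε := le_trans (by positivity) rate_le
  have exp_rate_le : exp (2 * C₀ * (a₀ + 1) * ε) - 1 ≤ 2 * (2 * C₀ * (a₀ + 1) * ε) := by
    have := (abs_le.1 (Real.abs_exp_sub_one_le (abs_le.2 ⟨by linarith, hsmall⟩))).2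
    rwa [abs_of_nonneg rate_nonneg] at this
  calc _ ≤ (|fieldB A₁ A₂ (x₀, exp t₀)| + 1) *
        (exp (C₀ * (exp |r - t₀| * (|x - x₀| / exp t₀) + |r - t₀|)) - 1) :=
        hH.abs_fieldB_sub_le h₁ h₂ x₀ t₀ x r
    _ ≤ (|fieldB A₁ A₂ (x₀, exp t₀)| + |fieldB A₁ A₂ (x₀, exp t₀)|) *
        (2 * (2 * C₀ * (a₀ + 1) * ε)) := by
        refine mul_le_mul (by linarith) (le_trans ?_ exp_rate_le) ?_ (by positivity)
        · gcongr
        · rw [sub_nonneg, one_le_exp_iff]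
          positivity
    _ = 8 * C₀ * (a₀ + 1) * ε * |fieldB A₁ A₂ (x₀, exp t₀)| := by ring

lemma Atil_eq_integral_exp (h₁ : ContDiffOn ℝ 2 A₁ UHP) (h₂ : ContDiffOn ℝ 2 A₂ UHP)
    (t₀ : ℝ) (p : ℝ × ℝ) :
    Atil A₁ A₂ t₀ p = -∫ r in t₀..p.2, fieldB A₁ A₂ (p.1, exp r) * exp (-r) := by
  have cont : ContinuousOn (fun s => fieldB A₁ A₂ (p.1, s) / s ^ 2) (Set.Ioi 0) :=
    ((contDiffOn_fieldB h₁ h₂).continuousOn.comp (f := fun s : ℝ => (p.1, s)) (by fun_prop)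
      fun s hs => hs).div (by fun_prop) fun s hs => (pow_pos hs 2).ne'
  have substitution := intervalIntegral.integral_comp_mul_deriv'' (a := t₀) (b := p.2)
    (g := fun s => fieldB A₁ A₂ (p.1, s) / s ^ 2) continuous_exp.continuousOn
    (fun r _ => (hasDerivAt_exp r).hasDerivWithinAt) continuous_exp.continuousOn
    (cont.mono (by rintro _ ⟨r, -, rfl⟩; exact exp_pos r))
  rw [Atil, ← substitution]
  congr 1
  refine intervalIntegral.integral_congr fun r _ => ?_
  have := exp_ne_zero r
  simp only [Function.comp, exp_neg]
  field_simp

lemma continuous_Atil (h₁ : ContDiffOn ℝ 2 A₁ UHP) (h₂ : ContDiffOn ℝ 2 A₂ UHP) (t₀ : ℝ) :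
    Continuous (Atil A₁ A₂ t₀) := by
  rw [funext (Atil_eq_integral_exp h₁ h₂ t₀)]
  refine (intervalIntegral.continuous_parametric_intervalIntegral_of_continuous
    (f := fun (p : ℝ × ℝ) r => fieldB A₁ A₂ (p.1, exp r) * exp (-r)) ?_ continuous_snd).neg
  exact ((continuous_fieldB_exp h₁ h₂).comp
    (f := fun q : (ℝ × ℝ) × ℝ => (q.1.1, q.2)) (by fun_prop)).mul (by fun_prop)

lemma exp_mul_Atil_sub_Azero (h₁ : ContDiffOn ℝ 2 A₁ UHP) (h₂ : ContDiffOn ℝ 2 A₂ UHP)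
    (b₀ x t₀ t : ℝ) :
    exp t₀ * (Atil A₁ A₂ t₀ (x, t) - Azero t₀ b₀ (x, t)) =
      -∫ r in t₀..t, (exp (-(r - t₀)) * fieldB A₁ A₂ (x, exp r) - b₀) := by
  have cont : Continuous fun r : ℝ => fieldB A₁ A₂ (x, exp r) :=
    (continuous_fieldB_exp h₁ h₂).comp (f := fun r : ℝ => (x, r)) (by fun_prop)
  have split (r : ℝ) : exp (-(r - t₀)) * fieldB A₁ A₂ (x, exp r) - b₀ =
      exp t₀ * (fieldB A₁ A₂ (x, exp r) * exp (-r)) - b₀ := by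
    rw [neg_sub, sub_eq_add_neg t₀ r, exp_add]
    ring
  simp only [split]
  rw [Atil_eq_integral_exp h₁ h₂, intervalIntegral.integral_sub
    (Continuous.intervalIntegrable (by fun_prop) _ _) (by simp),
    intervalIntegral.integral_const_mul, intervalIntegral.integral_const]
  have exp_mul_exp_neg : exp t₀ * exp (-t₀) = 1 := by simp [← exp_add]
  simp only [Azero, smul_eq_mul]
  linear_combination ((t - t₀) * b₀) * exp_mul_exp_neg

lemma exp_mul_abs_Atil_sub_Azero_le (h₁ : ContDiffOn ℝ 2 A₁ UHP) (h₂ : ContDiffOn ℝ 2 A₂ UHP)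
    {b₀ δ ε x t₀ t : ℝ} (hε : ε ≤ 1) (ht : |t - t₀| ≤ ε / 2)
    (hδ : ∀ r, |r - t₀| ≤ ε / 2 → |fieldB A₁ A₂ (x, exp r) - b₀| ≤ δ) :
    exp t₀ * |Atil A₁ A₂ t₀ (x, t) - Azero t₀ b₀ (x, t)| ≤ (2 * δ + ε * |b₀|) * |t - t₀| := by
  have abs_exp_mul (z : ℝ) : exp t₀ * |z| = |exp t₀ * z| := by
    rw [abs_mul, abs_of_pos (exp_pos t₀)]
  rw [abs_exp_mul, exp_mul_Atil_sub_Azero h₁ h₂, abs_neg]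
  refine intervalIntegral.norm_integral_le_of_norm_le_const (E := ℝ) fun r hr => ?_
  have hr' : |r - t₀| ≤ ε / 2 :=
    (Set.abs_sub_left_of_mem_uIcc (Set.uIoc_subset_uIcc hr)).trans ht
  have exp_sub_one : |exp (-(r - t₀)) - 1| ≤ ε := by
    have := Real.abs_exp_sub_one_le (x := -(r - t₀)) (by rw [abs_neg]; linarith)
    rw [abs_neg] at this
    linarith
  have exp_le_two : |exp (-(r - t₀))| ≤ 2 := by
    rw [abs_le] at exp_sub_one ⊢
    constructor <;> linarith
  have split : exp (-(r - t₀)) * fieldB A₁ A₂ (x, exp r) - b₀ =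
      exp (-(r - t₀)) * (fieldB A₁ A₂ (x, exp r) - b₀) + (exp (-(r - t₀)) - 1) * b₀ := by ring
  rw [split, Real.norm_eq_abs]
  grw [abs_add_le, abs_mul, abs_mul, exp_le_two, exp_sub_one, hδ r hr']

theorem H2.exp_mul_abs_Atil_sub_Azero_le (hH : H2 C₀ A₁ A₂) (h₁ : ContDiffOn ℝ 2 A₁ UHP)
    (h₂ : ContDiffOn ℝ 2 A₂ UHP) {a₀ ε x₀ t₀ x t : ℝ} (ha₀ : 0 ≤ a₀) (hε : ε ≤ 1)
    (hsmall : 2 * C₀ * (a₀ + 1) * ε ≤ 1) (hβ : 1 ≤ |fieldB A₁ A₂ (x₀, exp t₀)|)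
    (hx : |x - x₀| ≤ ε * a₀ * exp t₀) (ht : |t - t₀| ≤ ε / 2) :
    exp t₀ * |Atil A₁ A₂ t₀ (x, t) - Azero t₀ (fieldB A₁ A₂ (x₀, exp t₀)) (x, t)| ≤
      (16 * C₀ * (a₀ + 1) + 1) * ε ^ 2 * |fieldB A₁ A₂ (x₀, exp t₀)| := by
  have hC₀ := hH.nonneg
  have hε0 : 0 ≤ ε := by linarith [abs_nonneg (t - t₀)]
  refine (_root_.exp_mul_abs_Atil_sub_Azero_le h₁ h₂ hε ht fun r hr =>
    hH.abs_fieldB_sub_le_mul h₁ h₂ hε hsmall hβ hx hr).trans ?_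
  calc _ ≤ (2 * (8 * C₀ * (a₀ + 1) * ε * |fieldB A₁ A₂ (x₀, exp t₀)|) +
        ε * |fieldB A₁ A₂ (x₀, exp t₀)|) * ε := by
        gcongr
        linarith
    _ = (16 * C₀ * (a₀ + 1) + 1) * ε ^ 2 * |fieldB A₁ A₂ (x₀, exp t₀)| := by ring

end Field

/-! ### Comparison of the quadratic forms -/

section Forms

variable {A₁ A₂ : ℝ × ℝ → ℝ} {x₀ t₀ a b₀ ε : ℝ} {w : ℝ × ℝ → ℂ}

/-- The common shape of the densities of the forms `qhatK`, `qhatK0` and `qK0`, which differ only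
in the metric factor `ρ` and in the magnetic potential `α`. -/
def formDensity (ρ α : ℝ × ℝ → ℝ) (w : ℝ × ℝ → ℂ) (p : ℝ × ℝ) : ℝ :=
  ρ p * ‖-Complex.I * dX w p - (α p : ℂ) * w p‖ ^ 2 + ‖dY w p‖ ^ 2 + (1/4) * ‖w p‖ ^ 2

lemma IsTestOn.integrable_formDensity {Ω : Set (ℝ × ℝ)} {ρ α : ℝ × ℝ → ℝ} (hw : IsTestOn Ω w)
    (hρ : Continuous ρ) (hα : Continuous α) : Integrable (formDensity ρ α w) := by
  have := hw.contDiff_one.continuous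
  have := continuous_dX hw.contDiff_one
  have := continuous_dY hw.contDiff_one
  have cont : Continuous (formDensity ρ α w) := by
    unfold formDensity
    fun_prop
  have hw' : IsTestOn (tsupport w) w := ⟨hw.1, hw.2.1, subset_rfl⟩
  refine cont.integrable_of_hasCompactSupport (.intro hw.2.1 fun p hp => ?_)
  simp [formDensity, hw'.eq_zero hp, hw'.dX_eq_zero hp, hw'.dY_eq_zero hp]

lemma IsTestOn.integrable_norm_sq {Ω : Set (ℝ × ℝ)} (hw : IsTestOn Ω w) :
    Integrable fun p => ‖w p‖ ^ 2 :=
  integrable_norm_sq_of_hasCompactSupport hw.contDiff_one.continuous hw.2.1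

lemma measurableSet_Krect : MeasurableSet (Krect x₀ t₀ a ε) :=
  measurableSet_Ioo.prod measurableSet_Ioo

lemma abs_snd_sub_le_of_mem_Krect {p : ℝ × ℝ} (hp : p ∈ Krect x₀ t₀ a ε) :
    |p.2 - t₀| ≤ ε / 2 :=
  abs_le.2 ⟨by linarith [hp.2.1], by linarith [hp.2.2]⟩

lemma abs_fst_sub_le_of_mem_Krect {p : ℝ × ℝ} (hp : p ∈ Krect x₀ t₀ a ε) :
    |p.1 - x₀| ≤ ε * a * exp t₀ / 2 :=
  abs_le.2 ⟨by linarith [hp.1.1], by linarith [hp.1.2]⟩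

lemma one_sub_mul_exp_le_exp {s t δ : ℝ} (h : |s - t| ≤ δ) : (1 - δ) * exp t ≤ exp s :=
  calc (1 - δ) * exp t ≤ exp (s - t) * exp t := by
        gcongr
        linarith [add_one_le_exp (s - t), neg_le_of_abs_le h]
    _ = exp s := by rw [← exp_add, sub_add_cancel]

lemma mul_formDensity_le_of_mul_le {ρ ρ' α : ℝ × ℝ → ℝ} {θ : ℝ} {p : ℝ × ℝ} (hθ : θ ≤ 1)
    (hρ : θ * ρ p ≤ ρ' p) : θ * formDensity ρ α w p ≤ formDensity ρ' α w p := by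
  have kinetic := mul_le_mul_of_nonneg_right hρ
    (sq_nonneg ‖-Complex.I * dX w p - (α p : ℂ) * w p‖)
  have rest := mul_le_of_le_one_left
    (by positivity : 0 ≤ ‖dY w p‖ ^ 2 + 1 / 4 * ‖w p‖ ^ 2) hθ
  unfold formDensity
  linarith

lemma IsTestOn.mul_qhatK0_le_qhatK (h₁ : ContDiffOn ℝ 2 A₁ UHP) (h₂ : ContDiffOn ℝ 2 A₂ UHP)
    (hw : IsTestOn (Krect x₀ t₀ a ε) w) :
    (1 - ε) * qhatK0 A₁ A₂ x₀ t₀ a ε w ≤ qhatK A₁ A₂ x₀ t₀ a ε w := by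
  have hα := continuous_Atil h₁ h₂ t₀
  unfold qhatK0 qhatK
  rw [← integral_const_mul]
  refine setIntegral_mono_on
    ((hw.integrable_formDensity (ρ := fun _ => exp (2 * t₀)) (by fun_prop) hα).const_mul
      _).integrableOn
    (hw.integrable_formDensity (ρ := fun p => exp (2 * p.2)) (by fun_prop) hα).integrableOn
    measurableSet_Krect fun p hp => ?_
  have height := abs_snd_sub_le_of_mem_Krect hp
  refine mul_formDensity_le_of_mul_le (ρ := fun _ => exp (2 * t₀)) (ρ' := fun p => exp (2 * p.2))
    (by linarith [abs_nonneg (p.2 - t₀)]) (one_sub_mul_exp_le_exp ?_)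
  rw [← mul_sub, abs_mul, abs_two]
  linarith

lemma one_sub_sq_mul_norm_sq_sub_le {E : Type*} [SeminormedAddCommGroup E] (u v : E) {η : ℝ}
    (hη : η ≠ 0) : (1 - η ^ 2) * ‖u‖ ^ 2 - ‖v‖ ^ 2 / η ^ 2 ≤ ‖u - v‖ ^ 2 := by
  have reverse_triangle : (‖u‖ - ‖v‖) ^ 2 ≤ ‖u - v‖ ^ 2 :=
    sq_le_sq.2 (by simpa using abs_norm_sub_norm_le u v)
  have young : (η * ‖u‖ - ‖v‖ / η) ^ 2 =
      η ^ 2 * ‖u‖ ^ 2 - 2 * ‖u‖ * ‖v‖ + ‖v‖ ^ 2 / η ^ 2 := by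
    field_simp
    ring
  linarith [sq_nonneg ‖v‖, sq_nonneg (η * ‖u‖ - ‖v‖ / η)]

lemma mul_formDensity_sub_le_formDensity {ρ α₀ α : ℝ × ℝ → ℝ} {η : ℝ} {p : ℝ × ℝ} (hη : η ≠ 0)
    (hρ : 0 ≤ ρ p) :
    (1 - η ^ 2) * formDensity ρ α₀ w p - ρ p * ((α p - α₀ p) ^ 2 * ‖w p‖ ^ 2 / η ^ 2) ≤
      formDensity ρ α w p := by
  set P := -Complex.I * dX w p with hP
  have gauge : P - (α p : ℂ) * w p =
      (P - (α₀ p : ℂ) * w p) - ((α p - α₀ p : ℝ) : ℂ) * w p := by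
    push_cast
    ring
  have young := mul_le_mul_of_nonneg_left (one_sub_sq_mul_norm_sq_sub_le
    (P - (α₀ p : ℂ) * w p) (((α p - α₀ p : ℝ) : ℂ) * w p) hη) hρ
  rw [← gauge, norm_mul, Complex.norm_real, mul_pow, Real.norm_eq_abs, sq_abs] at young
  have rest := mul_le_of_le_one_left
    (by positivity : 0 ≤ ‖dY w p‖ ^ 2 + 1 / 4 * ‖w p‖ ^ 2)
    (by linarith [sq_nonneg η] : 1 - η ^ 2 ≤ 1)
  rw [formDensity, formDensity, ← hP]
  linarith

lemma exp_two_mul_mul_sq (t z : ℝ) : exp (2 * t) * z ^ 2 = (exp t * z) ^ 2 := by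
  rw [mul_pow, ← exp_nat_mul, Nat.cast_two]

lemma IsTestOn.mul_qK0_sub_le_qhatK0 (h₁ : ContDiffOn ℝ 2 A₁ UHP) (h₂ : ContDiffOn ℝ 2 A₂ UHP)
    (hw : IsTestOn (Krect x₀ t₀ a ε) w) {η δ : ℝ} (hη : η ≠ 0)
    (hδ : ∀ p ∈ Krect x₀ t₀ a ε, exp t₀ * |Atil A₁ A₂ t₀ p - Azero t₀ b₀ p| ≤ δ) :
    (1 - η ^ 2) * qK0 x₀ t₀ a ε b₀ w - δ ^ 2 / η ^ 2 * ∫ p in Krect x₀ t₀ a ε, ‖w p‖ ^ 2 ≤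
      qhatK0 A₁ A₂ x₀ t₀ a ε w := by
  set ρ : ℝ × ℝ → ℝ := fun _ => exp (2 * t₀)
  have int_Azero : Integrable fun p => (1 - η ^ 2) * formDensity ρ (Azero t₀ b₀) w p :=
    (hw.integrable_formDensity (by fun_prop) (by unfold Azero; fun_prop)).const_mul _
  have int_norm := hw.integrable_norm_sq.const_mul (δ ^ 2 / η ^ 2)
  have int_Atil := hw.integrable_formDensity (ρ := ρ) (by fun_prop) (continuous_Atil h₁ h₂ t₀)
  calc _ = ∫ p in Krect x₀ t₀ a ε,
        ((1 - η ^ 2) * formDensity ρ (Azero t₀ b₀) w p - δ ^ 2 / η ^ 2 * ‖w p‖ ^ 2) := by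
        rw [integral_sub int_Azero.integrableOn int_norm.integrableOn, integral_const_mul,
          integral_const_mul]
        rfl
    _ ≤ ∫ p in Krect x₀ t₀ a ε, formDensity ρ (Atil A₁ A₂ t₀) w p := by
        refine setIntegral_mono_on (int_Azero.sub int_norm).integrableOn int_Atil.integrableOn
          measurableSet_Krect fun p hp => ?_
        refine le_trans ?_ (mul_formDensity_sub_le_formDensity (α₀ := Azero t₀ b₀) hη
          (exp_pos (2 * t₀)).le)
        rw [← sq_abs (_ - _), mul_div_right_comm, ← mul_assoc, ← mul_div_assoc,
          exp_two_mul_mul_sq]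
        gcongr
        exact hδ p hp

lemma IsTestOn.setIntegral_norm_sq {Ω : Set (ℝ × ℝ)} (hw : IsTestOn Ω w) :
    ∫ p in Ω, ‖w p‖ ^ 2 = ∫ p, ‖w p‖ ^ 2 :=
  setIntegral_eq_integral_of_forall_compl_eq_zero fun p hp => by simp [hw.eq_zero hp]

lemma norm_kineticX_sq (p : ℝ × ℝ) : ‖kineticX (exp t₀) t₀ b₀ w p‖ ^ 2 =
    exp (2 * t₀) * ‖-Complex.I * dX w p - (Azero t₀ b₀ p : ℂ) * w p‖ ^ 2 := by
  have exp_mul_Azero : exp t₀ * Azero t₀ b₀ p = -((p.2 - t₀) * b₀) := by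
    have : exp t₀ * exp (-t₀) = 1 := by simp [← exp_add]
    unfold Azero
    linear_combination (-(p.2 - t₀) * b₀) * this
  have factor : kineticX (exp t₀) t₀ b₀ w p =
      (exp t₀ : ℂ) * (-Complex.I * dX w p - (Azero t₀ b₀ p : ℂ) * w p) := by
    rw [kineticX, mul_sub, ← mul_assoc (exp t₀ : ℂ) (Azero t₀ b₀ p : ℂ), ← Complex.ofReal_mul,
      exp_mul_Azero]
    push_cast
    ring
  rw [factor, norm_mul, Complex.norm_real, norm_of_nonneg (exp_pos t₀).le, exp_two_mul_mul_sq]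

lemma IsTestOn.qK0_eq (hw : IsTestOn (Krect x₀ t₀ a ε) w) :
    qK0 x₀ t₀ a ε b₀ w = landauForm (exp t₀) t₀ b₀ w + 1/4 * ∫ p, ‖w p‖ ^ 2 := by
  have int_landau :
      Integrable fun p => ‖kineticX (exp t₀) t₀ b₀ w p‖ ^ 2 + ‖dY w p‖ ^ 2 :=
    (integrable_norm_sq_of_hasCompactSupport (continuous_kineticX hw.contDiff_one)
      hw.hasCompactSupport_kineticX).add (integrable_norm_sq_of_hasCompactSupport
        (continuous_dY hw.contDiff_one) hw.hasCompactSupport_dY)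
  simp only [qK0, ← norm_kineticX_sq]
  rw [setIntegral_eq_integral_of_forall_compl_eq_zero fun p hp => by
      simp [hw.kineticX_eq_zero hp, hw.dY_eq_zero hp, hw.eq_zero hp],
    integral_add int_landau (hw.integrable_norm_sq.const_mul _), integral_const_mul, landauForm]

lemma IsTestOn.qK0_lt_of_qhatK_lt (h₁ : ContDiffOn ℝ 2 A₁ UHP) (h₂ : ContDiffOn ℝ 2 A₂ UHP)
    (hw : IsTestOn (Krect x₀ t₀ a ε) w) {C M η lam : ℝ} (hε : 0 ≤ ε) (hC : 1 ≤ C) (hεC : ε * C < 1)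
    (hM : M ^ 2 ≤ C) (hη : 0 < η) (hη1 : η < 1)
    (hA : ∀ p ∈ Krect x₀ t₀ a ε,
      exp t₀ * |Atil A₁ A₂ t₀ p - Azero t₀ b₀ p| ≤ M * ε ^ 2 * |b₀|)
    (hq : qhatK A₁ A₂ x₀ t₀ a ε w < lam * ∫ p in Krect x₀ t₀ a ε, ‖w p‖ ^ 2) :
    qK0 x₀ t₀ a ε b₀ w < (1 - η ^ 2)⁻¹ *
      (lam / (1 - ε * C) + ε ^ 4 / η ^ 2 * C * |b₀| ^ 2) *
        ∫ p in Krect x₀ t₀ a ε, ‖w p‖ ^ 2 := by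
  have hη2 : 0 < 1 - η ^ 2 := by nlinarith
  have hεC' : 0 < 1 - ε * C := by linarith
  have qhatK0_nonneg : 0 ≤ qhatK0 A₁ A₂ x₀ t₀ a ε w :=
    integral_nonneg fun p => by positivity
  set W := ∫ p in Krect x₀ t₀ a ε, ‖w p‖ ^ 2
  have qhatK0_lt : qhatK0 A₁ A₂ x₀ t₀ a ε w < lam / (1 - ε * C) * W := by
    rw [div_mul_eq_mul_div, lt_div_iff₀' hεC']
    refine lt_of_le_of_lt ?_ ((hw.mul_qhatK0_le_qhatK h₁ h₂).trans_lt hq)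
    gcongr
    exact le_mul_of_one_le_right hε hC
  have error : (M * ε ^ 2 * |b₀|) ^ 2 / η ^ 2 * W ≤ ε ^ 4 / η ^ 2 * C * |b₀| ^ 2 * W :=
    calc _ = ε ^ 4 / η ^ 2 * M ^ 2 * |b₀| ^ 2 * W := by ring
      _ ≤ _ := by gcongr
  have frozen := hw.mul_qK0_sub_le_qhatK0 h₁ h₂ hη.ne' hA
  rw [mul_assoc, lt_inv_mul_iff₀ hη2]
  linarith

end Forms

/-! ### Counting functions -/

lemma heav_nonneg (ρ : ℝ) : 0 ≤ heav ρ := by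
  unfold heav
  split_ifs <;> simp

lemma exists_tsum_heav_eq {β : ℝ} (hβ : 0 < β) (μ : ℝ) :
    ∃ l : ℕ, ∑' k : ℕ, heav (μ - (2 * (k : ℝ) + 1) * β) = l ∧ μ ≤ (2 * l + 1) * β := by
  set l := ⌈(μ / β - 1) / 2⌉₊ with hl
  have pos_iff (k : ℕ) : 0 < μ - (2 * (k : ℝ) + 1) * β ↔ k ∈ Finset.range l := by
    rw [Finset.mem_range, hl, Nat.lt_ceil, sub_pos, lt_div_iff₀ two_pos, lt_sub_iff_add_lt,
      lt_div_iff₀ hβ, mul_comm (k : ℝ) 2]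
  refine ⟨l, ?_, ?_⟩
  · simp only [heav, pos_iff]
    rw [tsum_eq_sum (s := Finset.range l) fun k hk => if_neg hk, Finset.sum_ite_mem]
    simp
  · have := Nat.le_ceil ((μ / β - 1) / 2)
    rw [← div_le_iff₀ hβ]
    linarith

lemma cast_NN_le {q nsq : (ℝ × ℝ → ℂ) → ℝ} {dom : Set (ℝ × ℝ → ℂ)} {lam R : ℝ} (hR : 0 ≤ R)
    (h : ∀ V : Submodule ℂ (ℝ × ℝ → ℂ), (∀ u ∈ V, u ∈ dom) →
      (∀ u ∈ V, u ≠ 0 → q u < lam * nsq u) → (Module.finrank ℂ V : ℝ) ≤ R) :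
    (NN q dom nsq lam : ℝ) ≤ R := by
  refine (Nat.le_floor_iff hR).1 (csSup_le' ?_)
  rintro _ ⟨V, hV, rfl, hq⟩
  exact Nat.le_floor (h V hV hq)

theorem finrank_le_of_qK0_lt {x₀ t₀ a ε b₀ Λ : ℝ} (ha : 0 < a) (hε : 0 < ε) (hb : b₀ ≠ 0)
    {V : Submodule ℂ (ℝ × ℝ → ℂ)} (hV : ∀ u ∈ V, IsTestOn (Krect x₀ t₀ a ε) u)
    (hq : ∀ u ∈ V, u ≠ 0 → qK0 x₀ t₀ a ε b₀ u < Λ * ∫ p in Krect x₀ t₀ a ε, ‖u p‖ ^ 2) :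
    (Module.finrank ℂ V : ℝ) ≤ (a * ε ^ 2 * exp t₀) * |b₀| / (2 * π * exp t₀) *
      ∑' k : ℕ, heav (Λ - 1/4 - (2 * (k : ℝ) + 1) * |b₀|) := by
  obtain ⟨l, tsum_eq, hl⟩ := exists_tsum_heav_eq (abs_pos.2 hb) (Λ - 1/4)
  have Krect_eq : Krect x₀ t₀ a ε = Set.Ioo (x₀ - ε * a * exp t₀ / 2) (x₀ + ε * a * exp t₀ / 2) ×ˢ
      Set.Ioo (t₀ - ε / 2) (t₀ - ε / 2 + ε) := by
    rw [Krect, sub_add, half_sub, sub_neg_eq_add]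
  have width_pos : 0 < ε * a * exp t₀ := by positivity
  have landau_lt (u : ℝ × ℝ → ℂ) (hu : u ∈ V) (hu0 : u ≠ 0) :
      landauForm (exp t₀) t₀ b₀ u < (Λ - 1/4) * ∫ p, ‖u p‖ ^ 2 := by
    have := hq u hu hu0
    rw [(hV u hu).qK0_eq, (hV u hu).setIntegral_norm_sq] at this
    linarith
  rw [Krect_eq] at hV
  refine (finrank_le_of_landauForm_lt (by linarith) hε.le (exp_pos t₀) hb hl hV
    landau_lt).trans_eq ?_
  rw [tsum_eq]
  ring

theorem counting_upper_bound_variable_field_general {C₀ C₁ a₀ a ε₀ x₀ t₀ lam η : ℝ}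
    {A₁ A₂ : ℝ × ℝ → ℝ} (hC₁ : (16 * C₀ * (a₀ + 1) + 1) ^ 2 + 1 ≤ C₁)
    (h₁ : ContDiffOn ℝ 2 A₁ UHP) (h₂ : ContDiffOn ℝ 2 A₂ UHP) (hH : H2 C₀ A₁ A₂)
    (ha : 0 < a) (haa₀ : a ≤ a₀) (hε₀ : 0 < ε₀) (hεC₁ : ε₀ * C₁ < 1)
    (hβ : 1 ≤ intenB A₁ A₂ (x₀, exp t₀)) (hη : 0 < η) (hη1 : η < 1) :
    (NKA A₁ A₂ x₀ t₀ a ε₀ lam : ℝ) ≤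
      (a * ε₀ ^ 2 * exp t₀) * intenB A₁ A₂ (x₀, exp t₀) / (2 * π * exp t₀) *
        ∑' k : ℕ, heav ((1 - η ^ 2)⁻¹ * (lam / (1 - ε₀ * C₁) +
            (ε₀ ^ 4 / η ^ 2) * C₁ * intenB A₁ A₂ (x₀, exp t₀) ^ 2)
          - 1/4 - (2 * (k : ℝ) + 1) * intenB A₁ A₂ (x₀, exp t₀)) := by
  rw [intenB] at hβ ⊢
  set b₀ := fieldB A₁ A₂ (x₀, exp t₀)
  have hC₀a₀ : 0 ≤ C₀ * (a₀ + 1) := mul_nonneg hH.nonneg (by linarith)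
  have one_le_C₁ : 1 ≤ C₁ := by nlinarith
  have small : 2 * C₀ * (a₀ + 1) * ε₀ ≤ 1 := by
    have : 2 * C₀ * (a₀ + 1) ≤ C₁ := by nlinarith
    linarith [mul_le_mul_of_nonneg_right this hε₀.le]
  have potential (p : ℝ × ℝ) (hp : p ∈ Krect x₀ t₀ a ε₀) :
      exp t₀ * |Atil A₁ A₂ t₀ p - Azero t₀ b₀ p| ≤
        (16 * C₀ * (a₀ + 1) + 1) * ε₀ ^ 2 * |b₀| := by
    refine hH.exp_mul_abs_Atil_sub_Azero_le h₁ h₂ (ha.le.trans haa₀) (by nlinarith) small hβ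
      ?_ (abs_snd_sub_le_of_mem_Krect hp)
    have width_le : ε₀ * a * exp t₀ ≤ ε₀ * a₀ * exp t₀ := by gcongr
    linarith [abs_fst_sub_le_of_mem_Krect hp, (by positivity : 0 ≤ ε₀ * a * exp t₀)]
  refine cast_NN_le (mul_nonneg (by positivity) (tsum_nonneg fun k => heav_nonneg _))
    fun V hV hq => ?_
  exact finrank_le_of_qK0_lt ha hε₀ (abs_pos.1 (by linarith)) hV fun u hu hu0 =>
    IsTestOn.qK0_lt_of_qhatK_lt h₁ h₂ (hV u hu) hε₀.le one_le_C₁ hεC₁ (by linarith) hη hη1 potential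
      (hq u hu hu0)

/-- upper bound for the counting function of `q̂^Ã_K`. -/
theorem counting_upper_bound_variable_field
    (C₀ : ℝ) (hC₀ : 0 < C₀) (a₀ : ℝ) (ha₀ : 1 < a₀) :
    ∃ C₁ : ℝ, 1 < C₁ ∧
      ∀ A₁ A₂ : ℝ × ℝ → ℝ, ContDiffOn ℝ 2 A₁ UHP → ContDiffOn ℝ 2 A₂ UHP →
      H2 C₀ A₁ A₂ →
      ∀ a : ℝ, 1 / a₀ < a → a ≤ a₀ →
      ∀ ε₀ : ℝ, 0 < ε₀ → ε₀ < 1 / (2 * C₁) →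
      ∀ x₀ t₀ : ℝ, 1 < intenB A₁ A₂ (x₀, Real.exp t₀) →
      ∀ lam : ℝ, 1 < lam → ∀ η : ℝ, 0 < η → η < 1 / 2 →
        (NKA A₁ A₂ x₀ t₀ a ε₀ lam : ℝ) ≤
          (a * ε₀ ^ 2 * Real.exp t₀) * intenB A₁ A₂ (x₀, Real.exp t₀) /
              (2 * π * Real.exp t₀) *
            ∑' k : ℕ, heav
              ((1 - η ^ 2)⁻¹ * (lam / (1 - ε₀ * C₁) +
                  (ε₀ ^ 4 / η ^ 2) * C₁ * intenB A₁ A₂ (x₀, Real.exp t₀) ^ 2)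
                - 1/4 - (2 * (k : ℝ) + 1) * intenB A₁ A₂ (x₀, Real.exp t₀)) := by
  refine ⟨(16 * C₀ * (a₀ + 1) + 1) ^ 2 + 1, by nlinarith [mul_pos hC₀ (by linarith : 0 < a₀ + 1)],
    fun A₁ A₂ h₁ h₂ hH a ha haa₀ ε₀ hε₀ hεC₁ x₀ t₀ hβ lam _ η hη hη2 => ?_⟩
  rw [lt_div_iff₀ (by positivity)] at hεC₁
  exact counting_upper_bound_variable_field_general le_rfl h₁ h₂ hH
    (ha.trans' (by positivity)) haa₀ hε₀ (by linarith) hβ.le hη (by linarith)
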